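/- Fix Ω₀ > 0 and set Ω(ε) = Ω₀/ε. There exist a constant C = C(Ω₀) and ε₀ > 0 such that for all 0 < ε < ε₀ and every GP minimizer Ψ of E^GP_{ε,Ω(ε)}, the density satisfies ‖ |Ψ|² − ρ^TF ‖_{L¹(B₁)} ≤ C √(ε|log ε|), where ρ^TF is the unique normalized minimizer of the Thomas–Fermi functional associated with Ω₀ (explicitly, ρ^TF(x) = 1/π − (Ω₀²/16)(1 − 2|x|²) if Ω₀ ≤ 4/√π and ρ^TF(x) = max(0, (Ω₀²/8)(|x|² − 1) + Ω₀/(2√π)) if Ω₀ > 4/√π). -/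

import Mathlib

open MeasureTheory Real Filter

noncomputable section

/-- Points of the plane. -/
abbrev Pt : Type := EuclideanSpace ℝ (Fin 2)

/-- The open unit disc. -/
def B1 : Set Pt := Metric.ball 0 1

/-- First partial derivative of a complex-valued function. -/
def pd1 (Ψ : Pt → ℂ) (x : Pt) : ℂ := fderiv ℝ Ψ x (EuclideanSpace.single 0 1)

/-- Second partial derivative of a complex-valued function. -/
def pd2 (Ψ : Pt → ℂ) (x : Pt) : ℂ := fderiv ℝ Ψ x (EuclideanSpace.single 1 1)

/-- Angular momentum operator `L = -i (x₁ ∂₂ - x₂ ∂₁)`. -/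
def angMom (Ψ : Pt → ℂ) (x : Pt) : ℂ :=
  -Complex.I * ((x 0 : ℂ) * pd2 Ψ x - (x 1 : ℂ) * pd1 Ψ x)

/-- The Gross-Pitaevskii energy density `|∇Ψ|² - Ω conj(Ψ) LΨ + |Ψ|⁴/ε²`. -/
def gpDensity (ε Ω : ℝ) (Ψ : Pt → ℂ) (x : Pt) : ℝ :=
  ‖pd1 Ψ x‖ ^ 2 + ‖pd2 Ψ x‖ ^ 2
    - Ω * (starRingEnd ℂ (Ψ x) * angMom Ψ x).re
    + ‖Ψ x‖ ^ 4 / ε ^ 2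

/-- The Gross-Pitaevskii functional on the unit disc. -/
def gpEnergy (ε Ω : ℝ) (Ψ : Pt → ℂ) : ℝ := ∫ x in B1, gpDensity ε Ω Ψ x

/-- Admissible (H¹, normalized) wave functions. -/
def gpAdm (Ψ : Pt → ℂ) : Prop :=
  DifferentiableOn ℝ Ψ B1 ∧
  IntegrableOn (fun x => ‖Ψ x‖ ^ 2) B1 ∧
  IntegrableOn (fun x => ‖pd1 Ψ x‖ ^ 2 + ‖pd2 Ψ x‖ ^ 2) B1 ∧
  IntegrableOn (fun x => ‖Ψ x‖ ^ 4) B1 ∧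
  IntegrableOn (fun x => (starRingEnd ℂ (Ψ x) * angMom Ψ x).re) B1 ∧
  (∫ x in B1, ‖Ψ x‖ ^ 2) = 1

/-- The GP ground-state energy: infimum of the functional over normalized functions. -/
def gpGround (ε Ω : ℝ) : ℝ := sInf {E | ∃ Ψ : Pt → ℂ, gpAdm Ψ ∧ E = gpEnergy ε Ω Ψ}

/-- A GP minimizer: a normalized admissible function attaining the infimum. -/
def IsGPMinimizer (ε Ω : ℝ) (Ψ : Pt → ℂ) : Prop :=
  gpAdm Ψ ∧ gpEnergy ε Ω Ψ = gpGround ε Ω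

/-- The Thomas-Fermi functional. -/
def tfEnergy (Ω₀ : ℝ) (ρ : Pt → ℝ) : ℝ :=
  ∫ x in B1, ((ρ x) ^ 2 - Ω₀ ^ 2 * ‖x‖ ^ 2 * ρ x / 4)

/-- Admissible TF densities: nonnegative, in L²(B₁), of total mass one. -/
def tfAdm (ρ : Pt → ℝ) : Prop :=
  IntegrableOn ρ B1 ∧ IntegrableOn (fun x => (ρ x) ^ 2) B1 ∧
  (∀ᵐ x ∂(volume.restrict B1), 0 ≤ ρ x) ∧ (∫ x in B1, ρ x) = 1

/-- The TF ground-state energy. -/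
def tfGround (Ω₀ : ℝ) : ℝ := sInf {E | ∃ ρ : Pt → ℝ, tfAdm ρ ∧ E = tfEnergy Ω₀ ρ}

/-- Radius of the TF "hole". -/
def R0 (Ω₀ : ℝ) : ℝ := Real.sqrt (1 - 4 / (Real.sqrt π * Ω₀))

/-- The TF minimizer. -/
def rhoTF (Ω₀ : ℝ) (x : Pt) : ℝ :=
  if Ω₀ ≤ 4 / Real.sqrt π then 1 / π - Ω₀ ^ 2 / 16 * (1 - 2 * ‖x‖ ^ 2)
  else max 0 (Ω₀ ^ 2 / 8 * (‖x‖ ^ 2 - 1) + Ω₀ / (2 * Real.sqrt π))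



lemma hasDerivAt_max_sq (s : ℝ) : HasDerivAt (fun s : ℝ => (max 0 s) ^ 2) (2 * max 0 s) s := by
  rcases lt_trichotomy s 0 with h | h | h
  · rw [max_eq_left h.le]
    have : (fun s : ℝ => (max 0 s) ^ 2) =ᶠ[nhds s] fun _ => 0 := by
      filter_upwards [gt_mem_nhds h] with y hy
      rw [max_eq_left hy.le]; simp
    simpa using (hasDerivAt_const s (0:ℝ)).congr_of_eventuallyEq this
  · subst h
    rw [hasDerivAt_iff_isLittleO_nhds_zero]
    simp only [zero_add, max_self, mul_zero, smul_zero, sub_zero, ne_eq, OfNat.ofNat_ne_zero,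
      not_false_eq_true, zero_pow]
    have h1 : (fun h : ℝ => (max 0 h) ^ 2) =O[nhds 0] fun h : ℝ => h ^ 2 := by
      apply Asymptotics.IsBigO.of_bound 1
      filter_upwards with h
      rw [Real.norm_eq_abs, Real.norm_eq_abs, abs_of_nonneg (by positivity),
        abs_of_nonneg (by positivity), one_mul]
      rcases le_total h 0 with h' | h'
      · rw [max_eq_left h']; simpa using sq_nonneg h
      · rw [max_eq_right h']
    exact h1.trans_isLittleO (by simpa using Asymptotics.isLittleO_pow_id (𝕜 := ℝ) one_lt_two)
  · rw [max_eq_right h.le]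
    have : (fun s : ℝ => (max 0 s) ^ 2) =ᶠ[nhds s] fun s => s ^ 2 := by
      filter_upwards [lt_mem_nhds h] with y hy
      rw [max_eq_right hy.le]
    simpa using (hasDerivAt_pow 2 s).congr_of_eventuallyEq this

/-- radial integrals over the disc -/
lemma integral_B1_radial (h : ℝ → ℝ) :
    ∫ x in B1, h ‖x‖ = 2 * π * ∫ r in (0:ℝ)..1, r * h r := by
  have hm : MeasurableSet B1 := Metric.isOpen_ball.measurableSet
  have h1 : ∫ x in B1, h ‖x‖ = ∫ x : Pt, (Set.Iio (1:ℝ)).indicator h ‖x‖ := by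
    rw [← integral_indicator hm]
    congr 1; ext x
    by_cases hx : ‖x‖ < 1
    · have : x ∈ B1 := by simpa [B1] using hx
      simp [Set.indicator, this, hx]
    · have : x ∉ B1 := by simpa [B1] using hx
      simp [Set.indicator, this, hx]
  rw [h1, integral_fun_norm_addHaar (volume : Measure Pt)]
  have h2 : (volume : Measure Pt).real (Metric.ball 0 1) = π := by
    rw [Measure.real, EuclideanSpace.volume_ball_fin_two]
    simp [ENNReal.toReal_ofReal, Real.pi_pos.le]
  rw [h2, intervalIntegral.integral_of_le zero_le_one, ← integral_Ioc_eq_integral_Ioo.symm]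
  simp only [finrank_euclideanSpace, Fintype.card_fin, nsmul_eq_mul, smul_eq_mul]
  have : ∫ y in Set.Ioi (0:ℝ), y ^ (2-1) * (Set.Iio (1:ℝ)).indicator h y
      = ∫ y in Set.Ioo (0:ℝ) 1, y * h y := by
    have e : Set.Ioo (0:ℝ) 1 = Set.Ioi 0 ∩ Set.Iio 1 := by ext; simp
    rw [e, Set.inter_comm, ← Measure.restrict_restrict measurableSet_Iio,
      ← integral_indicator measurableSet_Iio]
    congr 1; ext y
    by_cases hy : y < 1 <;> simp [Set.indicator, hy]
  rw [this]; push_cast; ring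

lemma integral_max_affine (a b : ℝ) (ha : 0 < a) :
    ∫ x in B1, max 0 (a * ‖x‖ ^ 2 + b) =
      2 * π * (((max 0 (a + b)) ^ 2 - (max 0 b) ^ 2) / (4 * a)) := by
  rw [integral_B1_radial (fun r => max 0 (a * r ^ 2 + b))]
  congr 1
  have : ∀ r ∈ Set.uIcc (0:ℝ) 1, HasDerivAt (fun r => (max 0 (a * r ^ 2 + b)) ^ 2 / (4 * a))
      (r * max 0 (a * r ^ 2 + b)) r := by
    intro r _
    have h1 : HasDerivAt (fun r : ℝ => a * r ^ 2 + b) (a * (2 * r)) r := by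
      simpa using ((hasDerivAt_pow 2 r).const_mul a).add_const b
    have h2 := ((hasDerivAt_max_sq (a * r ^ 2 + b)).comp r h1).div_const (4 * a)
    refine h2.congr_deriv ?_
    field_simp; ring
  rw [intervalIntegral.integral_eq_sub_of_hasDerivAt this]
  · simp; ring
  · apply Continuous.intervalIntegrable; fun_prop

lemma rhoTF_form (Ω₀ : ℝ) (hΩ : 0 < Ω₀) : ∃ b : ℝ,
    (∀ x, rhoTF Ω₀ x = max 0 (Ω₀ ^ 2 / 8 * ‖x‖ ^ 2 + b)) ∧ ∫ x in B1, rhoTF Ω₀ x = 1 := by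
  have hpi := Real.pi_pos
  have hsp : 0 < √π := Real.sqrt_pos.2 hpi
  have hsq : √π ^ 2 = π := Real.sq_sqrt hpi.le
  by_cases hc : Ω₀ ≤ 4 / √π
  · have h0 : 0 ≤ 1 / π - Ω₀ ^ 2 / 16 := by
      have : Ω₀ ^ 2 ≤ (4 / √π) ^ 2 := by gcongr
      rw [div_pow, hsq] at this
      have e : 1 / π = (4 ^ 2 / π) / 16 := by field_simp; norm_num
      rw [e]; linarith
    have hf : ∀ x, rhoTF Ω₀ x = max 0 (Ω₀ ^ 2 / 8 * ‖x‖ ^ 2 + (1 / π - Ω₀ ^ 2 / 16)) := by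
      intro x
      rw [max_eq_right (add_nonneg (by positivity) h0)]
      simp only [rhoTF, if_pos hc]; ring
    refine ⟨_, hf, ?_⟩
    simp_rw [hf]
    rw [integral_max_affine _ _ (by positivity), max_eq_right h0,
      max_eq_right (add_nonneg (by positivity) h0)]
    field_simp; ring
  · have hc' := not_le.1 hc
    have hf : ∀ x, rhoTF Ω₀ x = max 0 (Ω₀ ^ 2 / 8 * ‖x‖ ^ 2 + (Ω₀ / (2 * √π) - Ω₀ ^ 2 / 8)) := by
      intro x
      simp only [rhoTF, if_neg hc]; ring_nf
    refine ⟨_, hf, ?_⟩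
    simp_rw [hf]
    have h1 : Ω₀ / (2 * √π) - Ω₀ ^ 2 / 8 ≤ 0 := by
      rw [div_lt_iff₀ hsp] at hc'
      rw [sub_nonpos, div_le_div_iff₀ (by positivity) (by positivity)]
      nlinarith
    have e : Ω₀ ^ 2 / 8 + (Ω₀ / (2 * √π) - Ω₀ ^ 2 / 8) = Ω₀ / (2 * √π) := by ring
    rw [integral_max_affine _ _ (by positivity), max_eq_left h1, e, max_eq_right (by positivity)]
    rw [div_pow, mul_pow, hsq]
    field_simp; ring

/-- one-dimensional regularised modulus, product rule with a gauge term -/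
lemma cov_deriv_bound (f : ℝ → ℂ) (g : ℝ → ℝ) (f' : ℂ) (g' a d t : ℝ) (hd : 0 < d)
    (hf : HasDerivAt f f' t) (hg : HasDerivAt g g' t) :
    ∃ D : ℂ, HasDerivAt (fun t => ((g t / √(‖f t‖ ^ 2 + d) : ℝ) : ℂ) * f t) D t ∧
      ‖D - Complex.I * a * (((g t / √(‖f t‖ ^ 2 + d) : ℝ) : ℂ) * f t)‖ ≤
        |g'| + 2 * |g t| * (‖f' - Complex.I * a * f t‖ / √(‖f t‖ ^ 2 + d)) := by
  have hN : HasDerivAt (fun t => ‖f t‖ ^ 2 + d) (2 * (inner ℝ (f t) f')) t := by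
    simpa using (hf.norm_sq).add_const d
  have hpos : 0 < ‖f t‖ ^ 2 + d := by positivity
  have hS := hN.sqrt hpos.ne'
  have hs : 0 < √(‖f t‖ ^ 2 + d) := Real.sqrt_pos.2 hpos
  have hss : √(‖f t‖ ^ 2 + d) ^ 2 = ‖f t‖ ^ 2 + d := Real.sq_sqrt hpos.le
  have hq := hg.div hS hs.ne'
  have hH := (hq.ofReal_comp).mul hf
  refine ⟨_, hH, ?_⟩
  set s := √(‖f t‖ ^ 2 + d) with hsdef
  set c := f' - Complex.I * a * f t with hc
  have hin : inner ℝ (f t) f' = inner ℝ (f t) c := by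
    rw [hc]
    simp only [Complex.inner, Complex.mul_re, Complex.conj_re, Complex.conj_im, Complex.sub_re, Complex.sub_im, Complex.mul_im, Complex.I_re, Complex.I_im, Complex.ofReal_re, Complex.ofReal_im]
    ring
  rw [hin]
  set q := inner ℝ (f t) c with hqdef
  have hqb : |q| ≤ ‖f t‖ * ‖c‖ := abs_real_inner_le_norm _ _
  have hfs : ‖f t‖ ≤ s := by
    apply Real.le_sqrt_of_sq_le; linarith
  have hdec : (((g' * s - g t * (2 * q / (2 * s))) / s ^ 2 : ℝ) : ℂ) * f t + ((g t / s : ℝ) : ℂ) * f' -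
      Complex.I * a * (((g t / s : ℝ) : ℂ) * f t) =
      ((g' / s : ℝ) : ℂ) * f t - ((g t * q / s ^ 3 : ℝ) : ℂ) * f t + ((g t / s : ℝ) : ℂ) * c := by
    have hsC : (s : ℂ) ≠ 0 := by exact_mod_cast hs.ne'
    rw [hc]; push_cast; field_simp; ring
  have b1 : ‖((g' / s : ℝ) : ℂ) * f t‖ ≤ |g'| := by
    rw [norm_mul, Complex.norm_real, Real.norm_eq_abs, abs_div, abs_of_pos hs, div_mul_eq_mul_div,
      div_le_iff₀ hs]
    gcongr
  have b2 : ‖((g t * q / s ^ 3 : ℝ) : ℂ) * f t‖ ≤ |g t| * (‖c‖ / s) := by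
    rw [norm_mul, Complex.norm_real, Real.norm_eq_abs, abs_div, abs_mul, abs_of_pos (pow_pos hs 3)]
    have : |g t| * |q| / s ^ 3 * ‖f t‖ ≤ |g t| * (s * ‖c‖) / s ^ 3 * s := by
      have : |q| ≤ s * ‖c‖ := hqb.trans (by gcongr)
      gcongr
    refine this.trans (le_of_eq ?_)
    field_simp
  have b3 : ‖((g t / s : ℝ) : ℂ) * c‖ ≤ |g t| * (‖c‖ / s) := by
    rw [norm_mul, Complex.norm_real, Real.norm_eq_abs, abs_div, abs_of_pos hs]
    exact le_of_eq (by ring)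
  have := norm_add_le (((g' / s : ℝ) : ℂ) * f t - ((g t * q / s ^ 3 : ℝ) : ℂ) * f t) (((g t / s : ℝ) : ℂ) * c)
  have h3 := norm_sub_le (((g' / s : ℝ) : ℂ) * f t) (((g t * q / s ^ 3 : ℝ) : ℂ) * f t)
  calc _ = _ := congrArg norm hdec
    _ ≤ _ := by linarith

/-- smoothed positive part -/
def rhoS (e s : ℝ) : ℝ := (s + √(s ^ 2 + e ^ 2)) / 2

lemma rhoS_pos (e s : ℝ) (he : 0 < e) : 0 < rhoS e s := by
  have : |s| < √(s ^ 2 + e ^ 2) := by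
    rw [← Real.sqrt_sq_eq_abs]; exact Real.sqrt_lt_sqrt (by positivity) (by nlinarith [pow_pos he 2])
  unfold rhoS
  have := neg_abs_le s
  linarith

lemma rhoS_close (e s : ℝ) (he : 0 < e) : |rhoS e s - max 0 s| ≤ e := by
  have h1 : |s| ≤ √(s ^ 2 + e ^ 2) := Real.abs_le_sqrt (by nlinarith [sq_nonneg e])
  have h2 : √(s ^ 2 + e ^ 2) ≤ |s| + e := by
    rw [Real.sqrt_le_left (by positivity)]
    nlinarith [abs_nonneg s, sq_abs s]
  have h3 : max 0 s = (s + |s|) / 2 := by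
    rcases le_total s 0 with h | h
    · rw [max_eq_left h, abs_of_nonpos h]; ring
    · rw [max_eq_right h, abs_of_nonneg h]; ring
  rw [h3, rhoS, abs_le]
  constructor <;> linarith

lemma rhoS_deriv (e : ℝ) (he : 0 < e) (s : ℝ → ℝ) (s' t : ℝ) (hs : HasDerivAt s s' t) :
    ∃ g', HasDerivAt (fun t => √(rhoS e (s t))) g' t ∧ g' ^ 2 ≤ s' ^ 2 / e := by
  have hr := rhoS_pos e (s t) he
  have hq : 0 < s t ^ 2 + e ^ 2 := by positivity
  have h1 : HasDerivAt (fun t => s t ^ 2 + e ^ 2) (2 * s t * s') t := by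
    simpa using (hs.pow 2).add_const (e ^ 2)
  have h2 : HasDerivAt (fun t => rhoS e (s t)) ((s' + (2 * s t * s') / (2 * √(s t ^ 2 + e ^ 2))) / 2) t :=
    (hs.add (h1.sqrt hq.ne')).div_const 2
  refine ⟨_, h2.sqrt hr.ne', ?_⟩
  set q := √(s t ^ 2 + e ^ 2) with hqd
  have hq0 : 0 < q := Real.sqrt_pos.2 hq
  have hqe : e ≤ q := Real.le_sqrt_of_sq_le (by nlinarith)
  have hqs : s t ≤ q := Real.le_sqrt_of_sq_le (by nlinarith)
  have e1 : (s' + 2 * s t * s' / (2 * q)) / 2 = s' * rhoS e (s t) / q := by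
    rw [rhoS, ← hqd]; field_simp; ring
  have hrq : rhoS e (s t) ≤ q := by rw [rhoS, ← hqd]; linarith
  rw [e1, div_pow, div_pow, mul_pow, mul_pow, Real.sq_sqrt hr.le]
  rw [div_div, div_le_div_iff₀ (by positivity) he]
  have : rhoS e (s t) * e ≤ q ^ 2 := by nlinarith
  nlinarith [mul_le_mul_of_nonneg_left this (mul_nonneg (sq_nonneg s') hr.le), mul_nonneg (mul_nonneg (sq_nonneg s') hr.le) (sq_nonneg q)]

def eta (t : ℝ) : ℝ := (max 0 (1 - t ^ 2)) ^ 2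

lemma eta_nonneg (t : ℝ) : 0 ≤ eta t := by unfold eta; positivity

lemma eta_max_le (t : ℝ) : max 0 (1 - t ^ 2) ≤ 1 := max_le zero_le_one (by nlinarith [sq_nonneg t])

lemma eta_le_one (t : ℝ) : eta t ≤ 1 := by
  unfold eta
  exact pow_le_one₀ (le_max_left _ _) (eta_max_le t)

lemma eta_max_zero (t : ℝ) (h : 1 ≤ |t|) : max 0 (1 - t ^ 2) = 0 := by
  apply max_eq_left
  have := sq_abs t
  nlinarith

lemma eta_zero (t : ℝ) (h : 1 ≤ |t|) : eta t = 0 := by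
  unfold eta; rw [eta_max_zero t h]; simp

lemma eta_half (t : ℝ) (h : |t| ≤ 1 / 2) : 9 / 16 ≤ eta t := by
  have := sq_abs t
  have h0 := abs_nonneg t
  have : 3 / 4 ≤ max 0 (1 - t ^ 2) := le_max_of_le_right (by nlinarith)
  unfold eta
  nlinarith

def eta' (t : ℝ) : ℝ := 2 * max 0 (1 - t ^ 2) * (-(2 * t))

lemma eta_deriv (t : ℝ) : HasDerivAt eta (eta' t) t := by
  have h1 : HasDerivAt (fun t : ℝ => 1 - t ^ 2) (-(2 * t)) t := by
    simpa using (hasDerivAt_pow 2 t).const_sub 1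
  exact (hasDerivAt_max_sq (1 - t ^ 2)).comp t h1

lemma eta'_zero (t : ℝ) (h : 1 ≤ |t|) : eta' t = 0 := by
  unfold eta'; rw [eta_max_zero t h]; simp

lemma eta'_bound (t : ℝ) : |eta' t| ≤ 4 := by
  rcases le_total 1 |t| with h | h
  · rw [eta'_zero t h]; norm_num
  · unfold eta'
    rw [abs_mul, abs_mul, abs_neg, abs_mul, abs_of_nonneg (a := max 0 (1 - t ^ 2)) (le_max_left 0 (1 - t ^ 2))]
    have := eta_max_le t
    have h0 := le_max_left 0 (1 - t ^ 2)
    norm_num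
    nlinarith [abs_nonneg t]

/-- strip states -/
def stT (Om l : ℝ) (k : ℤ) (x : Pt) : ℂ :=
  (eta (x 1 / l - k) : ℂ) * Complex.exp (Complex.I * ((Om * (x 0 * x 1 / 2 - k * l * x 0) : ℝ) : ℂ))

def stP (Om l : ℝ) (S : Finset ℤ) (x : Pt) : ℂ := ∑ k ∈ S, stT Om l k x

lemma norm_stT (Om l : ℝ) (k : ℤ) (x : Pt) : ‖stT Om l k x‖ = eta (x 1 / l - k) := by
  unfold stT
  rw [norm_mul, mul_comm Complex.I, Complex.norm_exp_ofReal_mul_I, mul_one, Complex.norm_real,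
    Real.norm_eq_abs, abs_of_nonneg (eta_nonneg _)]

lemma stT_diff (Om l : ℝ) (k : ℤ) : Differentiable ℝ (stT Om l k) := by
  have he : Differentiable ℝ eta := fun t => (eta_deriv t).differentiableAt
  have h1 : Differentiable ℝ (fun x : Pt => eta (x 1 / l - k)) := by fun_prop
  have h2 : Differentiable ℝ (fun x : Pt => (Om * (x 0 * x 1 / 2 - k * l * x 0) : ℝ)) := by fun_prop
  unfold stT
  apply Differentiable.mul
  · exact Complex.ofRealCLM.differentiable.comp h1
  · apply Differentiable.cexp
    apply Differentiable.const_mul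
    exact Complex.ofRealCLM.differentiable.comp h2

lemma stP_diff (Om l : ℝ) (S : Finset ℤ) : Differentiable ℝ (stP Om l S) := by
  unfold stP
  have := fun k => stT_diff Om l k
  fun_prop

lemma sum_two_bound (S : Finset ℤ) (φ : ℤ → ℝ) (τ M : ℝ) (h0 : ∀ k, φ k ≤ M) (hM : 0 ≤ M)
    (hz : ∀ k : ℤ, 1 ≤ |τ - k| → φ k = 0) : ∑ k ∈ S, φ k ≤ 2 * M := by
  have : ∑ k ∈ S, φ k = ∑ k ∈ S ∩ {⌊τ⌋, ⌊τ⌋ + 1}, φ k := by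
    symm
    apply Finset.sum_subset Finset.inter_subset_left
    intro k hk hk'
    apply hz
    have h1 : k ≠ ⌊τ⌋ ∧ k ≠ ⌊τ⌋ + 1 := by
      constructor <;> rintro rfl <;> simp [hk] at hk'
    have h2 := Int.floor_le τ
    have h3 := Int.lt_floor_add_one τ
    rcases lt_or_ge k ⌊τ⌋ with h | h
    · have : (k : ℝ) + 1 ≤ ⌊τ⌋ := by exact_mod_cast h
      rw [le_abs]; left; linarith
    · have : ⌊τ⌋ + 2 ≤ k := by omega
      have : (⌊τ⌋ : ℝ) + 2 ≤ k := by exact_mod_cast this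
      rw [le_abs]; right; linarith
  rw [this]
  calc _ ≤ ∑ k ∈ S ∩ {⌊τ⌋, ⌊τ⌋ + 1}, M := Finset.sum_le_sum fun k _ => h0 k
    _ = (S ∩ {⌊τ⌋, ⌊τ⌋ + 1}).card * M := by simp
    _ ≤ 2 * M := by
      gcongr
      have : (S ∩ {⌊τ⌋, ⌊τ⌋ + 1}).card ≤ 2 :=
        (Finset.card_le_card Finset.inter_subset_right).trans Finset.card_le_two
      exact_mod_cast this

abbrev e0 : Pt := EuclideanSpace.single 0 1
abbrev e1 : Pt := EuclideanSpace.single 1 1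

lemma line00 (x : Pt) (t : ℝ) : (x + t • e0) 0 = x 0 + t := by simp [e0]
lemma line01 (x : Pt) (t : ℝ) : (x + t • e0) 1 = x 1 := by simp [e0]
lemma line10 (x : Pt) (t : ℝ) : (x + t • e1) 0 = x 0 := by simp [e1]
lemma line11 (x : Pt) (t : ℝ) : (x + t • e1) 1 = x 1 + t := by simp [e1]

lemma stT_d0 (Om l : ℝ) (k : ℤ) (x : Pt) :
    HasDerivAt (fun t : ℝ => stT Om l k (x + t • e0))
      (Complex.I * ((Om * (x 1 / 2 - k * l) : ℝ) : ℂ) * stT Om l k x) 0 := by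
  unfold stT
  simp only [line00, line01]
  have h : HasDerivAt (fun t : ℝ => Om * ((x 0 + t) * x 1 / 2 - k * l * (x 0 + t)))
      (Om * (x 1 / 2 - k * l)) 0 := by
    have h0 := (hasDerivAt_id (0:ℝ)).const_add (x 0)
    have := (((h0.mul_const (x 1)).div_const 2).sub (h0.const_mul (k * l))).const_mul Om
    simpa using this
  have := ((h.ofReal_comp.const_mul Complex.I).cexp).const_mul (eta (x 1 / l - k) : ℂ)
  refine this.congr_deriv ?_
  simp only [add_zero]
  ring

lemma stT_d1 (Om l : ℝ) (k : ℤ) (x : Pt) :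
    HasDerivAt (fun t : ℝ => stT Om l k (x + t • e1))
      (((eta' (x 1 / l - k) / l : ℝ) : ℂ) * Complex.exp (Complex.I * ((Om * (x 0 * x 1 / 2 - k * l * x 0) : ℝ) : ℂ))
        + Complex.I * ((Om * (x 0 / 2) : ℝ) : ℂ) * stT Om l k x) 0 := by
  unfold stT
  simp only [line10, line11]
  have h : HasDerivAt (fun t : ℝ => Om * (x 0 * (x 1 + t) / 2 - k * l * x 0))
      (Om * (x 0 / 2)) 0 := by
    have h0 := (hasDerivAt_id (0:ℝ)).const_add (x 1)
    have := (((h0.const_mul (x 0)).div_const 2).sub_const (k * l * x 0)).const_mul Om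
    simpa using this
  have h3 : HasDerivAt (fun t : ℝ => eta ((x 1 + t) / l - k)) (eta' (x 1 / l - k) / l) 0 := by
    have h0 := (((hasDerivAt_id (0:ℝ)).const_add (x 1)).div_const l).sub_const (k : ℝ)
    have h4 := eta_deriv ((x 1 + 0) / l - k)
    have := HasDerivAt.comp (0:ℝ) (h₂ := eta) (h := fun t : ℝ => (x 1 + t) / l - k) h4 h0
    refine this.congr_deriv ?_
    simp; ring
  have := h3.ofReal_comp.mul ((h.ofReal_comp.const_mul Complex.I).cexp)
  refine this.congr_deriv ?_
  simp only [add_zero]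
  ring

lemma stP_d0 (Om l : ℝ) (hO : 0 ≤ Om) (hl : 0 < l) (S : Finset ℤ) (x : Pt) :
    ∃ d, HasDerivAt (fun t : ℝ => stP Om l S (x + t • e0)) d 0 ∧
      ‖d - Complex.I * ((-(Om * x 1 / 2) : ℝ) : ℂ) * stP Om l S x‖ ≤ 2 * (Om * l) := by
  unfold stP
  refine ⟨_, HasDerivAt.fun_sum fun k _ => stT_d0 Om l k x, ?_⟩
  rw [Finset.mul_sum, ← Finset.sum_sub_distrib]
  refine (norm_sum_le _ _).trans ?_
  have key : ∀ k : ℤ, ‖Complex.I * ((Om * (x 1 / 2 - k * l) : ℝ) : ℂ) * stT Om l k x -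
      Complex.I * ((-(Om * x 1 / 2) : ℝ) : ℂ) * stT Om l k x‖ = Om * l * (|x 1 / l - k| * eta (x 1 / l - k)) := by
    intro k
    rw [← sub_mul, ← mul_sub, ← Complex.ofReal_sub, norm_mul, norm_mul, Complex.norm_I, norm_stT,
      Complex.norm_real, Real.norm_eq_abs]
    have : Om * (x 1 / 2 - k * l) - -(Om * x 1 / 2) = Om * l * (x 1 / l - k) := by
      field_simp; ring
    rw [this, abs_mul, abs_of_nonneg (by positivity)]; ring
  apply sum_two_bound S _ (x 1 / l) (Om * l) _ (by positivity)
  · intro k hk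
    rw [key, eta_zero _ hk]; simp
  · intro k
    rw [key]
    apply mul_le_of_le_one_right (by positivity)
    rcases le_total 1 |x 1 / l - k| with h | h
    · rw [eta_zero _ h]; simp
    · exact mul_le_one₀ h (eta_nonneg _) (eta_le_one _)

lemma stP_d1 (Om l : ℝ) (hl : 0 < l) (S : Finset ℤ) (x : Pt) :
    ∃ d, HasDerivAt (fun t : ℝ => stP Om l S (x + t • e1)) d 0 ∧
      ‖d - Complex.I * ((Om * x 0 / 2 : ℝ) : ℂ) * stP Om l S x‖ ≤ 2 * (4 / l) := by
  unfold stP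
  refine ⟨_, HasDerivAt.fun_sum fun k _ => stT_d1 Om l k x, ?_⟩
  rw [Finset.mul_sum, ← Finset.sum_sub_distrib]
  refine (norm_sum_le _ _).trans ?_
  have key : ∀ k : ℤ, ‖(((eta' (x 1 / l - k) / l : ℝ) : ℂ) * Complex.exp (Complex.I * ((Om * (x 0 * x 1 / 2 - k * l * x 0) : ℝ) : ℂ))
        + Complex.I * ((Om * (x 0 / 2) : ℝ) : ℂ) * stT Om l k x) -
      Complex.I * ((Om * x 0 / 2 : ℝ) : ℂ) * stT Om l k x‖ = |eta' (x 1 / l - k)| / l := by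
    intro k
    rw [mul_div_assoc Om, add_sub_cancel_right, norm_mul, mul_comm Complex.I, Complex.norm_exp_ofReal_mul_I, mul_one,
      Complex.norm_real, Real.norm_eq_abs, abs_div, abs_of_pos hl]
  apply sum_two_bound S _ (x 1 / l) (4 / l) _ (by positivity)
  · intro k hk
    rw [key, eta'_zero _ hk]; simp
  · intro k
    rw [key]
    gcongr
    exact eta'_bound _

lemma stP_norm_le (Om l : ℝ) (S : Finset ℤ) (x : Pt) : ‖stP Om l S x‖ ≤ 2 := by
  refine (norm_sum_le _ _).trans ?_
  have := sum_two_bound S (fun k => ‖stT Om l k x‖) (x 1 / l) 1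
    (fun k => by rw [norm_stT]; exact eta_le_one _) zero_le_one
    (fun k hk => by rw [norm_stT, eta_zero _ hk])
  linarith

/-- one of the two parity classes is not small -/
lemma stP_lower (Om l : ℝ) (K : ℤ) (x : Pt) (hK : |x 1 / l| + 1 ≤ K) :
    9 / 16 ≤ ‖stP Om l ((Finset.Icc (-K) K).filter (fun k => k % 2 = 0)) x‖ ∨
    9 / 16 ≤ ‖stP Om l ((Finset.Icc (-K) K).filter (fun k => k % 2 = 1)) x‖ := by
  set τ := x 1 / l with hτ
  set m := round τ with hm
  have hr : |τ - m| ≤ 1 / 2 := abs_sub_round τ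
  have hmK : m ∈ Finset.Icc (-K) K := by
    rw [Finset.mem_Icc]
    have h1 := abs_le.1 hr
    have h2 := abs_le.1 (show |τ| ≤ K - 1 by linarith)
    constructor
    · have : (-K : ℝ) ≤ m := by linarith [h1.2, h2.1]
      exact_mod_cast this
    · have : (m : ℝ) ≤ K := by linarith [h1.1, h2.2]
      exact_mod_cast this
  have main : ∀ S : Finset ℤ, m ∈ S → (∀ k ∈ S, k ≠ m → k % 2 = m % 2) → 9 / 16 ≤ ‖stP Om l S x‖ := by
    intro S hS hp
    have : stP Om l S x = stT Om l m x := by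
      unfold stP
      apply Finset.sum_eq_single_of_mem m hS
      intro k hk hkm
      have h2 := hp k hk hkm
      have : eta (x 1 / l - k) = 0 := by
        apply eta_zero
        rw [← hτ]
        have h1 := abs_le.1 hr
        rcases lt_or_gt_of_ne hkm with h | h
        · have : k + 2 ≤ m := by omega
          have : (k : ℝ) + 2 ≤ m := by exact_mod_cast this
          rw [le_abs]; left; linarith
        · have : m + 2 ≤ k := by omega
          have : (m : ℝ) + 2 ≤ k := by exact_mod_cast this
          rw [le_abs]; right; linarith
      rw [← norm_eq_zero, norm_stT, this]
    rw [this, norm_stT]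
    exact eta_half _ hr
  rcases Int.emod_two_eq_zero_or_one m with h | h
  · left
    apply main
    · simp only [Finset.mem_filter]; exact ⟨hmK, h⟩
    · intro k hk _
      rw [(Finset.mem_filter.1 hk).2, h]
  · right
    apply main
    · simp only [Finset.mem_filter]; exact ⟨hmK, h⟩
    · intro k hk _
      rw [(Finset.mem_filter.1 hk).2, h]

def kern (ε : ℝ) (w : ℂ) : ℝ := (Metric.ball (0:ℂ) 1).indicator (fun w => 1 / (‖w‖ ^ 2 + ε)) w

lemma kern_integrable (ε : ℝ) (hε : 0 < ε) : Integrable (kern ε) := by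
  have : IntegrableOn (fun w : ℂ => 1 / (‖w‖ ^ 2 + ε)) (Metric.ball (0:ℂ) 1) := by
    apply IntegrableOn.mono_set _ Metric.ball_subset_closedBall
    apply Continuous.continuousOn _ |>.integrableOn_compact (isCompact_closedBall _ _)
    apply Continuous.div continuous_const (by fun_prop)
    intro w; positivity
  exact this.integrable_indicator Metric.isOpen_ball.measurableSet

lemma kern_integral (ε : ℝ) (hε : 0 < ε) : ∫ w, kern ε w = π * (Real.log (1 + ε) - Real.log ε) := by
  have h1 : ∫ w, kern ε w = ∫ w : ℂ, (Set.Iio (1:ℝ)).indicator (fun r => 1 / (r ^ 2 + ε)) ‖w‖ := by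
    congr 1; ext w
    unfold kern
    by_cases hx : ‖w‖ < 1 <;> simp [Set.indicator, hx]
  rw [h1, integral_fun_norm_addHaar (volume : Measure ℂ)]
  have h2 : (volume : Measure ℂ).real (Metric.ball 0 1) = π := by
    rw [Measure.real, Complex.volume_ball]
    simp
  rw [h2]
  simp only [Complex.finrank_real_complex, nsmul_eq_mul, smul_eq_mul]
  have : ∫ y in Set.Ioi (0:ℝ), y ^ (2-1) * (Set.Iio (1:ℝ)).indicator (fun r => 1 / (r ^ 2 + ε)) y
      = ∫ y in (0:ℝ)..1, y * (1 / (y ^ 2 + ε)) := by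
    have e : Set.Ioo (0:ℝ) 1 = Set.Ioi 0 ∩ Set.Iio 1 := by ext; simp
    rw [intervalIntegral.integral_of_le zero_le_one, ← integral_Ioc_eq_integral_Ioo.symm]
    rw [e, Set.inter_comm, ← Measure.restrict_restrict measurableSet_Iio,
      ← integral_indicator measurableSet_Iio]
    congr 1; ext y
    by_cases hy : y < 1 <;> simp [Set.indicator, hy]
  rw [this]
  have hd : ∀ r ∈ Set.uIcc (0:ℝ) 1, HasDerivAt (fun r => Real.log (r ^ 2 + ε) / 2)
      (r * (1 / (r ^ 2 + ε))) r := by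
    intro r _
    have hp : 0 < r ^ 2 + ε := by positivity
    have h1 : HasDerivAt (fun r : ℝ => r ^ 2 + ε) (2 * r) r := by
      simpa using (hasDerivAt_pow 2 r).add_const ε
    refine ((h1.log hp.ne').div_const 2).congr_deriv ?_
    field_simp
  rw [intervalIntegral.integral_eq_sub_of_hasDerivAt hd]
  · simp; ring
  · apply Continuous.intervalIntegrable
    apply continuous_id.mul
    apply Continuous.div continuous_const (by fun_prop)
    intro w; positivity

lemma avg_w (ε : ℝ) (hε : 0 < ε) (A B : ℂ) (h : 9 / 16 ≤ ‖A‖ ∨ 9 / 16 ≤ ‖B‖) :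
    ∫ w in Metric.ball (0:ℂ) 1, 1 / (‖A + w * B‖ ^ 2 + ε) ≤
      100 * π + 64 * (π * (Real.log (1 + ε) - Real.log ε)) := by
  have hbd : ∀ w ∈ Metric.ball (0:ℂ) 1,
      1 / (‖A + w * B‖ ^ 2 + ε) ≤ 100 + 64 * kern ε (w + A / B) := by
    intro w hw
    have hw1 : ‖w‖ < 1 := by simpa using hw
    have hk0 : 0 ≤ kern ε (w + A / B) := by
      unfold kern; apply Set.indicator_nonneg; intro _ _; positivity
    by_cases hB : 1 / 8 ≤ ‖B‖
    · have hB0 : B ≠ 0 := by rintro rfl; norm_num at hB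
      have e : A + w * B = B * (w + A / B) := by field_simp; ring
      have hlow : (1 / 64) * (‖w + A / B‖ ^ 2 + ε) ≤ ‖A + w * B‖ ^ 2 + ε := by
        rw [e, norm_mul, mul_pow]
        have : (1 / 64 : ℝ) ≤ ‖B‖ ^ 2 := by nlinarith
        nlinarith [sq_nonneg ‖w + A / B‖]
      have h3 : 1 / (‖A + w * B‖ ^ 2 + ε) ≤ 64 * (1 / (‖w + A / B‖ ^ 2 + ε)) := by
        calc _ ≤ 1 / ((1 / 64) * (‖w + A / B‖ ^ 2 + ε)) :=
              one_div_le_one_div_of_le (by positivity) hlow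
          _ = _ := by field_simp
      by_cases hs : ‖w + A / B‖ < 1
      · have : kern ε (w + A / B) = 1 / (‖w + A / B‖ ^ 2 + ε) := by
          unfold kern; rw [Set.indicator_of_mem]; simpa using hs
        rw [this]; linarith
      · have : 1 / (‖w + A / B‖ ^ 2 + ε) ≤ 1 := by
          rw [div_le_one (by positivity)]
          have := not_lt.1 hs
          nlinarith
        linarith
    · have hB' := not_le.1 hB
      have hA : 9 / 16 ≤ ‖A‖ := by
        rcases h with h | h
        · exact h
        · linarith
      have h1 : ‖A‖ ≤ ‖A + w * B‖ + ‖w * B‖ := by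
        have := norm_sub_le (A + w * B) (w * B)
        simpa using this
      have h2 : ‖w * B‖ ≤ 1 / 8 := by
        rw [norm_mul]; nlinarith [norm_nonneg w, norm_nonneg B]
      have h3 : 1 / 100 ≤ ‖A + w * B‖ ^ 2 + ε := by nlinarith
      have : 1 / (‖A + w * B‖ ^ 2 + ε) ≤ 100 := by
        rw [div_le_iff₀ (by linarith)]; linarith
      linarith
  have hki := kern_integrable ε hε
  have hks : Integrable (fun w => kern ε (w + A / B)) := hki.comp_add_right (A / B)
  have hvol : (volume : Measure ℂ).real (Metric.ball 0 1) = π := by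
    rw [Measure.real, Complex.volume_ball]; simp
  have hfin : volume (Metric.ball (0:ℂ) 1) ≠ ⊤ := by
    exact measure_ball_lt_top.ne
  calc _ ≤ ∫ w in Metric.ball (0:ℂ) 1, (100 + 64 * kern ε (w + A / B)) := by
        apply integral_mono_of_nonneg
        · filter_upwards with w; positivity
        · exact (integrableOn_const hfin).add (hks.integrableOn.const_mul 64)
        · exact (ae_restrict_iff' Metric.isOpen_ball.measurableSet).2 (Filter.Eventually.of_forall hbd)
    _ = 100 * π + 64 * ∫ w in Metric.ball (0:ℂ) 1, kern ε (w + A / B) := by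
        have i1 : Integrable (fun _ : ℂ => (100:ℝ)) (volume.restrict (Metric.ball (0:ℂ) 1)) :=
          integrableOn_const hfin
        have i2 : Integrable (fun w : ℂ => 64 * kern ε (w + A / B)) (volume.restrict (Metric.ball (0:ℂ) 1)) :=
          hks.integrableOn.const_mul 64
        rw [integral_add i1 i2, integral_const_mul]
        simp [hvol]; ring
    _ ≤ 100 * π + 64 * ∫ w, kern ε (w + A / B) := by
        gcongr
        · filter_upwards with w
          unfold kern; apply Set.indicator_nonneg; intro _ _; positivity
        · exact Measure.restrict_le_self
    _ = _ := by rw [integral_add_right_eq_self (kern ε), kern_integral ε hε]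

lemma volB1 : (volume : Measure Pt).real B1 = π := by
  unfold B1
  rw [Measure.real, EuclideanSpace.volume_ball_fin_two]
  simp [Real.pi_pos.le]

lemma finB1 : volume B1 ≠ ⊤ := measure_ball_lt_top.ne

lemma measB1 : MeasurableSet B1 := Metric.isOpen_ball.measurableSet

lemma exists_good_w (ε : ℝ) (hε : 0 < ε) (A B : Pt → ℂ) (hA : Continuous A) (hB : Continuous B)
    (h : ∀ x ∈ B1, 9 / 16 ≤ ‖A x‖ ∨ 9 / 16 ≤ ‖B x‖) :
    ∃ w : ℂ, ‖w‖ < 1 ∧ ∫ x in B1, 1 / (‖A x + w * B x‖ ^ 2 + ε) ≤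
      100 * π + 64 * (π * (Real.log (1 + ε) - Real.log ε)) := by
  set C := 100 * π + 64 * (π * (Real.log (1 + ε) - Real.log ε)) with hC
  have hvol : (volume : Measure ℂ).real (Metric.ball 0 1) = π := by
    rw [Measure.real, Complex.volume_ball]; simp
  have hfin : volume (Metric.ball (0:ℂ) 1) ≠ ⊤ := measure_ball_lt_top.ne
  have : IsFiniteMeasure (volume.restrict (Metric.ball (0:ℂ) 1)) := ⟨by simp⟩
  have : IsFiniteMeasure (volume.restrict B1) := ⟨by simpa using finB1.lt_top⟩
  have hcont : Continuous (fun p : ℂ × Pt => 1 / (‖A p.2 + p.1 * B p.2‖ ^ 2 + ε)) := by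
    apply Continuous.div continuous_const (by fun_prop)
    intro p; positivity
  have hIntg : Integrable (fun p : ℂ × Pt => 1 / (‖A p.2 + p.1 * B p.2‖ ^ 2 + ε))
      ((volume.restrict (Metric.ball (0:ℂ) 1)).prod (volume.restrict B1)) := by
    apply Integrable.of_bound hcont.aestronglyMeasurable (1 / ε)
    filter_upwards with p
    rw [Real.norm_eq_abs, abs_of_nonneg (by positivity)]
    apply one_div_le_one_div_of_le hε
    nlinarith [sq_nonneg ‖A p.2 + p.1 * B p.2‖]
  have hswap := integral_integral_swap (f := fun (w : ℂ) (x : Pt) => 1 / (‖A x + w * B x‖ ^ 2 + ε)) hIntg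
  by_contra hcon
  push Not at hcon
  have hup : ∫ x in B1, ∫ w in Metric.ball (0:ℂ) 1, 1 / (‖A x + w * B x‖ ^ 2 + ε) ≤ π * C := by
    calc _ ≤ ∫ x in B1, C := by
          apply setIntegral_mono_on hIntg.integral_prod_right (integrableOn_const finB1) measB1
          intro x hx
          exact avg_w ε hε (A x) (B x) (h x hx)
      _ = π * C := by simp [volB1]
  have hQ : IntegrableOn (fun w : ℂ => ∫ x in B1, 1 / (‖A x + w * B x‖ ^ 2 + ε)) (Metric.ball 0 1) :=
    hIntg.integral_prod_left
  have hlo : 0 < ∫ w in Metric.ball (0:ℂ) 1, ((∫ x in B1, 1 / (‖A x + w * B x‖ ^ 2 + ε)) - C) := by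
    have hi : IntegrableOn (fun w : ℂ => (∫ x in B1, 1 / (‖A x + w * B x‖ ^ 2 + ε)) - C) (Metric.ball 0 1) :=
      hQ.sub (integrableOn_const (C := C) hfin)
    rw [setIntegral_pos_iff_support_of_nonneg_ae _ hi]
    · have : (Function.support fun w : ℂ => (∫ x in B1, 1 / (‖A x + w * B x‖ ^ 2 + ε)) - C) ∩ Metric.ball 0 1
          = Metric.ball (0:ℂ) 1 := by
        apply Set.inter_eq_right.2
        intro w hw
        have := hcon w (by simpa using hw)
        exact (sub_pos.2 this).ne'
      rw [show (Function.support (fun w : ℂ => (∫ x in B1, 1 / (‖A x + w * B x‖ ^ 2 + ε)) - C)) ∩ Metric.ball 0 1 = _ from this]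
      exact Metric.measure_ball_pos _ _ one_pos
    · refine (ae_restrict_iff' Metric.isOpen_ball.measurableSet).2 (Filter.Eventually.of_forall ?_)
      intro w hw
      exact (sub_pos.2 (hcon w (by simpa using hw))).le
  rw [integral_sub hQ (integrableOn_const hfin), hswap] at hlo
  simp only [integral_const, MeasurableSet.univ, measureReal_restrict_apply, Set.univ_inter, hvol, smul_eq_mul] at hlo
  linarith

/-- completing the square -/
lemma gpDensity_eq (ε Ω : ℝ) (Ψ : Pt → ℂ) (x : Pt) :
    gpDensity ε Ω Ψ x =
      ‖pd1 Ψ x - Complex.I * ((-(Ω * x 1 / 2) : ℝ) : ℂ) * Ψ x‖ ^ 2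
      + ‖pd2 Ψ x - Complex.I * ((Ω * x 0 / 2 : ℝ) : ℂ) * Ψ x‖ ^ 2
      - Ω ^ 2 / 4 * ‖x‖ ^ 2 * ‖Ψ x‖ ^ 2 + ‖Ψ x‖ ^ 4 / ε ^ 2 := by
  have hx : ‖x‖ ^ 2 = x 0 ^ 2 + x 1 ^ 2 := by
    rw [EuclideanSpace.norm_sq_eq]; simp [Fin.sum_univ_two]
  unfold gpDensity angMom
  rw [hx]
  simp only [← Complex.normSq_eq_norm_sq, Complex.normSq_apply]
  simp
  ring

lemma gpDensity_ge (ε Ω₀ : ℝ) (hε : 0 < ε) (Ψ : Pt → ℂ) (x : Pt) :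
    ((‖Ψ x‖ ^ 2) ^ 2 - Ω₀ ^ 2 * ‖x‖ ^ 2 * ‖Ψ x‖ ^ 2 / 4) / ε ^ 2 ≤ gpDensity ε (Ω₀ / ε) Ψ x := by
  rw [gpDensity_eq]
  have : ((‖Ψ x‖ ^ 2) ^ 2 - Ω₀ ^ 2 * ‖x‖ ^ 2 * ‖Ψ x‖ ^ 2 / 4) / ε ^ 2 =
     - (Ω₀ / ε) ^ 2 / 4 * ‖x‖ ^ 2 * ‖Ψ x‖ ^ 2 + ‖Ψ x‖ ^ 4 / ε ^ 2 := by
    field_simp; ring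
  rw [this]
  have h1 := sq_nonneg ‖pd1 Ψ x - Complex.I * ((-((Ω₀ / ε) * x 1 / 2) : ℝ) : ℂ) * Ψ x‖
  have h2 := sq_nonneg ‖pd2 Ψ x - Complex.I * (((Ω₀ / ε) * x 0 / 2 : ℝ) : ℂ) * Ψ x‖
  linarith

lemma gpDensity_integrable (ε Ω : ℝ) (Ψ : Pt → ℂ) (h : gpAdm Ψ) :
    IntegrableOn (gpDensity ε Ω Ψ) B1 := by
  obtain ⟨_, _, h2, h3, h4, _⟩ := h
  exact (h2.sub (h4.const_mul Ω)).add (h3.div_const _)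

lemma rhoTF_cont (Ω₀ : ℝ) (hΩ : 0 < Ω₀) : Continuous (rhoTF Ω₀) := by
  obtain ⟨b, hb, _⟩ := rhoTF_form Ω₀ hΩ
  have : rhoTF Ω₀ = fun x => max 0 (Ω₀ ^ 2 / 8 * ‖x‖ ^ 2 + b) := funext hb
  rw [this]; fun_prop

lemma cont_intOn (f : Pt → ℝ) (hf : Continuous f) : IntegrableOn f B1 := by
  apply IntegrableOn.mono_set _ Metric.ball_subset_closedBall
  exact hf.continuousOn.integrableOn_compact (isCompact_closedBall _ _)

/-- lower bound: TF energy is coercive -/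
lemma gp_lower (ε Ω₀ : ℝ) (hε : 0 < ε) (hΩ : 0 < Ω₀) (Ψ : Pt → ℂ) (h : gpAdm Ψ) :
    IntegrableOn (fun x => (‖Ψ x‖ ^ 2 - rhoTF Ω₀ x) ^ 2) B1 ∧
    tfEnergy Ω₀ (rhoTF Ω₀) + ∫ x in B1, (‖Ψ x‖ ^ 2 - rhoTF Ω₀ x) ^ 2 ≤
      ε ^ 2 * gpEnergy ε (Ω₀ / ε) Ψ := by
  obtain ⟨b, hb, hnorm⟩ := rhoTF_form Ω₀ hΩ
  have hc := rhoTF_cont Ω₀ hΩ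
  have hgi := gpDensity_integrable ε (Ω₀ / ε) Ψ h
  obtain ⟨h0, h1, h2, h3, h4, h5⟩ := h
  have hmul : IntegrableOn (fun x => rhoTF Ω₀ x * ‖Ψ x‖ ^ 2) B1 := by
    apply Integrable.bdd_mul (c := Ω₀ ^ 2 / 8 + |b|) h1 hc.aestronglyMeasurable.restrict
    refine (ae_restrict_iff' measB1).2 (Filter.Eventually.of_forall ?_)
    intro x hx
    have hx1 : ‖x‖ < 1 := by simpa [B1] using hx
    rw [hb, Real.norm_eq_abs, abs_of_nonneg (le_max_left _ _)]
    apply max_le (by positivity)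
    have : ‖x‖ ^ 2 ≤ 1 := by nlinarith [norm_nonneg x]
    have := le_abs_self b
    nlinarith [sq_nonneg Ω₀]
  have hsq : IntegrableOn (fun x => (‖Ψ x‖ ^ 2 - rhoTF Ω₀ x) ^ 2) B1 := by
    have : (fun x => (‖Ψ x‖ ^ 2 - rhoTF Ω₀ x) ^ 2) =
      fun x => (‖Ψ x‖ ^ 4 - 2 * (rhoTF Ω₀ x * ‖Ψ x‖ ^ 2)) + rhoTF Ω₀ x ^ 2 := by
      ext x; ring
    rw [this]
    exact (h3.sub (hmul.const_mul 2)).add (cont_intOn _ (by fun_prop))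
  refine ⟨hsq, ?_⟩
  have hρ : IntegrableOn (rhoTF Ω₀) B1 := cont_intOn _ hc
  have htf : IntegrableOn (fun x => (rhoTF Ω₀ x) ^ 2 - Ω₀ ^ 2 * ‖x‖ ^ 2 * rhoTF Ω₀ x / 4) B1 :=
    cont_intOn _ (by fun_prop)
  have hlin : IntegrableOn (fun x => 2 * b * (‖Ψ x‖ ^ 2 - rhoTF Ω₀ x)) B1 := (h1.sub hρ).const_mul (2 * b)
  have hlin0 : ∫ x in B1, 2 * b * (‖Ψ x‖ ^ 2 - rhoTF Ω₀ x) = 0 := by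
    rw [integral_const_mul, integral_sub h1 hρ, h5, hnorm]; simp
  have : ∫ x in B1, (((rhoTF Ω₀ x) ^ 2 - Ω₀ ^ 2 * ‖x‖ ^ 2 * rhoTF Ω₀ x / 4)
      + (‖Ψ x‖ ^ 2 - rhoTF Ω₀ x) ^ 2 + 2 * b * (‖Ψ x‖ ^ 2 - rhoTF Ω₀ x))
      ≤ ∫ x in B1, ε ^ 2 * gpDensity ε (Ω₀ / ε) Ψ x := by
    apply setIntegral_mono ((htf.add hsq).add hlin) (hgi.const_mul _)
    intro x
    have hg := gpDensity_ge ε Ω₀ hε Ψ x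
    rw [div_le_iff₀ (by positivity)] at hg
    set ρ := ‖Ψ x‖ ^ 2 with hρd
    have hρ0 : 0 ≤ ρ := by positivity
    have key : (rhoTF Ω₀ x) ^ 2 - Ω₀ ^ 2 * ‖x‖ ^ 2 * rhoTF Ω₀ x / 4
      + (ρ - rhoTF Ω₀ x) ^ 2 + 2 * b * (ρ - rhoTF Ω₀ x) ≤ ρ ^ 2 - Ω₀ ^ 2 * ‖x‖ ^ 2 * ρ / 4 := by
      rw [hb]
      rcases le_total 0 (Ω₀ ^ 2 / 8 * ‖x‖ ^ 2 + b) with hs | hs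
      · rw [max_eq_right hs]; exact le_of_eq (by ring)
      · rw [max_eq_left hs]; nlinarith [mul_nonneg hρ0 (neg_nonneg.2 hs)]
    simp only [Pi.add_apply]
    linarith
  have i1 : ∫ x in B1, (((rhoTF Ω₀ x) ^ 2 - Ω₀ ^ 2 * ‖x‖ ^ 2 * rhoTF Ω₀ x / 4)
      + (‖Ψ x‖ ^ 2 - rhoTF Ω₀ x) ^ 2 + 2 * b * (‖Ψ x‖ ^ 2 - rhoTF Ω₀ x)) =
      tfEnergy Ω₀ (rhoTF Ω₀) + (∫ x in B1, (‖Ψ x‖ ^ 2 - rhoTF Ω₀ x) ^ 2)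
      + ∫ x in B1, 2 * b * (‖Ψ x‖ ^ 2 - rhoTF Ω₀ x) := by
    unfold tfEnergy
    have hadd : IntegrableOn (fun x => ((rhoTF Ω₀ x) ^ 2 - Ω₀ ^ 2 * ‖x‖ ^ 2 * rhoTF Ω₀ x / 4)
      + (‖Ψ x‖ ^ 2 - rhoTF Ω₀ x) ^ 2) B1 := htf.add hsq
    rw [integral_add hadd hlin, integral_add htf hsq]
  rw [i1, hlin0, add_zero, integral_const_mul] at this
  exact this

lemma gpGround_le (ε Ω₀ : ℝ) (hε : 0 < ε) (hΩ : 0 < Ω₀) (Φ : Pt → ℂ) (h : gpAdm Φ) :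
    gpGround ε (Ω₀ / ε) ≤ gpEnergy ε (Ω₀ / ε) Φ := by
  apply csInf_le
  · refine ⟨tfEnergy Ω₀ (rhoTF Ω₀) / ε ^ 2, ?_⟩
    rintro E ⟨Ψ, hΨ, rfl⟩
    have := (gp_lower ε Ω₀ hε hΩ Ψ hΨ).2
    have h0 : 0 ≤ ∫ x in B1, (‖Ψ x‖ ^ 2 - rhoTF Ω₀ x) ^ 2 :=
      integral_nonneg fun x => sq_nonneg _
    rw [div_le_iff₀ (by positivity)]; linarith
  · exact ⟨Φ, h, rfl⟩

/-- final step given an upper bound by a trial function -/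
lemma final_step (Ω₀ : ℝ) (hΩ : 0 < Ω₀) (C ε lam : ℝ) (hε : 0 < ε) (hl : 0 < lam)
    (Φ : Pt → ℂ) (hΦ : gpAdm Φ)
    (hE : ε ^ 2 * gpEnergy ε (Ω₀ / ε) Φ ≤ tfEnergy Ω₀ (rhoTF Ω₀) + C * lam ^ 2)
    (Ψ : Pt → ℂ) (hΨ : IsGPMinimizer ε (Ω₀ / ε) Ψ) :
    (∫ x in B1, |‖Ψ x‖ ^ 2 - rhoTF Ω₀ x|) ≤ (C + π) * lam := by
  obtain ⟨hadm, hmin⟩ := hΨ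
  obtain ⟨hsq, hlow⟩ := gp_lower ε Ω₀ hε hΩ Ψ hadm
  have h1 : ∫ x in B1, (‖Ψ x‖ ^ 2 - rhoTF Ω₀ x) ^ 2 ≤ C * lam ^ 2 := by
    have := gpGround_le ε Ω₀ hε hΩ Φ hΦ
    rw [hmin] at hlow
    have := mul_le_mul_of_nonneg_left this (sq_nonneg ε)
    linarith
  have hci : IntegrableOn (fun _ : Pt => lam) B1 := integrableOn_const finB1
  have h2 : ∫ x in B1, |‖Ψ x‖ ^ 2 - rhoTF Ω₀ x| ≤
      ∫ x in B1, ((‖Ψ x‖ ^ 2 - rhoTF Ω₀ x) ^ 2 / lam + lam) := by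
    apply integral_mono_of_nonneg (Filter.Eventually.of_forall fun x => abs_nonneg _)
      ((hsq.div_const lam).add hci)
    filter_upwards with x
    have := sq_abs (‖Ψ x‖ ^ 2 - rhoTF Ω₀ x)
    simp only [Pi.add_apply]
    rw [← this]
    set u := |‖Ψ x‖ ^ 2 - rhoTF Ω₀ x| with hu
    have hu0 : 0 ≤ u := abs_nonneg _
    rw [div_add' _ _ _ hl.ne', le_div_iff₀ hl]
    nlinarith [sq_nonneg (u - lam)]
  have h3 : ∫ x in B1, ((‖Ψ x‖ ^ 2 - rhoTF Ω₀ x) ^ 2 / lam + lam) =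
      (∫ x in B1, (‖Ψ x‖ ^ 2 - rhoTF Ω₀ x) ^ 2) / lam + π * lam := by
    rw [integral_add (hsq.div_const lam) hci, integral_div]
    simp [volB1]
  rw [h3] at h2
  refine h2.trans ?_
  have : (∫ x in B1, (‖Ψ x‖ ^ 2 - rhoTF Ω₀ x) ^ 2) / lam ≤ C * lam := by
    rw [div_le_iff₀ hl]; linarith
  linarith

def trial (ε a b c : ℝ) (F : Pt → ℂ) (x : Pt) : ℂ :=
  ((c * √(rhoS ε (a * ‖x‖ ^ 2 + b)) / √(‖F x‖ ^ 2 + ε) : ℝ) : ℂ) * F x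

lemma rhoS_cont (ε : ℝ) : Continuous (rhoS ε) := by
  unfold rhoS; fun_prop

lemma rhoS_le (ε a b : ℝ) (hε : 0 < ε) (hε1 : ε ≤ 1) (ha : 0 < a) (x : Pt) (hx : x ∈ B1) :
    rhoS ε (a * ‖x‖ ^ 2 + b) ≤ a + |b| + 1 := by
  have hx1 : ‖x‖ < 1 := by simpa [B1] using hx
  have h1 := (abs_le.1 (rhoS_close ε (a * ‖x‖ ^ 2 + b) hε)).2
  have h2 : max 0 (a * ‖x‖ ^ 2 + b) ≤ a + |b| := by
    apply max_le (by positivity)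
    have : ‖x‖ ^ 2 ≤ 1 := by nlinarith [norm_nonneg x]
    have := le_abs_self b
    nlinarith
  linarith

lemma trial_normsq (ε a b c : ℝ) (hε : 0 < ε) (F : Pt → ℂ) (x : Pt) :
    ‖trial ε a b c F x‖ ^ 2 =
      c ^ 2 * (rhoS ε (a * ‖x‖ ^ 2 + b) * (1 - ε * (1 / (‖F x‖ ^ 2 + ε)))) := by
  unfold trial
  have hp : 0 < ‖F x‖ ^ 2 + ε := by positivity
  rw [norm_mul, Complex.norm_real, Real.norm_eq_abs, mul_pow, sq_abs, div_pow, mul_pow,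
    Real.sq_sqrt (rhoS_pos ε _ hε).le, Real.sq_sqrt hp.le]
  field_simp
  ring

lemma trial_diff (ε a b c : ℝ) (hε : 0 < ε) (F : Pt → ℂ) (hF : Differentiable ℝ F) :
    Differentiable ℝ (trial ε a b c F) := by
  have hn : Differentiable ℝ (fun x : Pt => ‖x‖ ^ 2) := differentiable_id.norm_sq ℝ
  have hs : Differentiable ℝ (fun x : Pt => a * ‖x‖ ^ 2 + b) := (hn.const_mul a).add_const b
  have hq : Differentiable ℝ (fun x : Pt => √((a * ‖x‖ ^ 2 + b) ^ 2 + ε ^ 2)) :=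
    ((hs.pow 2).add_const (ε ^ 2)).sqrt (fun x => (show 0 < (a * ‖x‖ ^ 2 + b) ^ 2 + ε ^ 2 by positivity).ne')
  have hr : Differentiable ℝ (fun x : Pt => rhoS ε (a * ‖x‖ ^ 2 + b)) := by
    have e : (fun x : Pt => rhoS ε (a * ‖x‖ ^ 2 + b)) = fun x : Pt =>
        (1 / 2) * ((a * ‖x‖ ^ 2 + b) + √((a * ‖x‖ ^ 2 + b) ^ 2 + ε ^ 2)) := by
      ext x; unfold rhoS; ring
    rw [e]; exact (hs.add hq).const_mul (1 / 2)
  have hg := hr.sqrt (fun x => (rhoS_pos ε _ hε).ne')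
  have hN : Differentiable ℝ (fun x : Pt => √(‖F x‖ ^ 2 + ε)) :=
    ((hF.norm_sq ℝ).add_const ε).sqrt (fun x => by positivity)
  have hN0 : ∀ x, √(‖F x‖ ^ 2 + ε) ≠ 0 := fun x => (Real.sqrt_pos.2 (by positivity)).ne'
  have hh : Differentiable ℝ (fun x : Pt => c * √(rhoS ε (a * ‖x‖ ^ 2 + b)) / √(‖F x‖ ^ 2 + ε)) :=
    (hg.const_mul c).mul (hN.inv hN0)
  exact (Complex.ofRealCLM.differentiable.comp hh).mul hF

lemma normsq_pt (x : Pt) : ‖x‖ ^ 2 = x 0 ^ 2 + x 1 ^ 2 := by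
  rw [EuclideanSpace.norm_sq_eq]; simp [Fin.sum_univ_two]

lemma s_line (a b : ℝ) (x v : Pt) (hv : ‖v‖ = 1) (hx : x ∈ B1) :
    ∃ s', HasDerivAt (fun t : ℝ => a * ‖x + t • v‖ ^ 2 + b) s' 0 ∧ s' ^ 2 ≤ 4 * a ^ 2 := by
  have hx1 : ‖x‖ < 1 := by simpa [B1] using hx
  have h0 : HasDerivAt (fun t : ℝ => x + t • v) v 0 := by
    simpa using ((hasDerivAt_id (0:ℝ)).smul_const v).const_add x
  have h1 := (h0.norm_sq.const_mul a).add_const b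
  refine ⟨_, h1, ?_⟩
  have h2 : |inner ℝ (x + (0:ℝ) • v) v| ≤ 1 := by
    refine (abs_real_inner_le_norm _ _).trans ?_
    simp only [zero_smul, add_zero, hv, mul_one]; exact hx1.le
  set i := inner ℝ (x + (0:ℝ) • v) v
  have h3 : i ^ 2 ≤ 1 := by rw [← sq_abs]; nlinarith [abs_nonneg i]
  nlinarith [sq_nonneg a]

lemma trial_cov (ε a b c κ α : ℝ) (hε : 0 < ε) (hε1 : ε ≤ 1) (ha : 0 < a) (F : Pt → ℂ)
    (hF : Differentiable ℝ F) (x v : Pt) (hx : x ∈ B1) (hv : ‖v‖ = 1)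
    (hD : ∃ d, HasDerivAt (fun t : ℝ => F (x + t • v)) d 0 ∧
      ‖d - Complex.I * (α : ℂ) * F x‖ ^ 2 ≤ κ) :
    ‖fderiv ℝ (trial ε a b c F) x v - Complex.I * (α : ℂ) * trial ε a b c F x‖ ^ 2 ≤
      c ^ 2 * (8 * a ^ 2 / ε + 8 * (a + |b| + 1) * κ * (1 / (‖F x‖ ^ 2 + ε))) := by
  obtain ⟨d, hd, hdb⟩ := hD
  obtain ⟨s', hs', hsb⟩ := s_line a b x v hv hx
  obtain ⟨g', hg', hgb⟩ := rhoS_deriv ε hε _ s' 0 hs'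
  obtain ⟨D, hDd, hDb⟩ := cov_deriv_bound (fun t : ℝ => F (x + t • v))
    (fun t => c * √(rhoS ε (a * ‖x + t • v‖ ^ 2 + b))) d (c * g') α ε 0 hε hd (hg'.const_mul c)
  have hfd : fderiv ℝ (trial ε a b c F) x v = D := by
    rw [← ((trial_diff ε a b c hε F hF) x).lineDeriv_eq_fderiv]
    have : HasLineDerivAt ℝ (trial ε a b c F) D x v := hDd
    exact this.lineDeriv
  simp only [zero_smul, add_zero] at hDb
  rw [hfd]
  have hp : 0 < ‖F x‖ ^ 2 + ε := by positivity
  set m := ‖d - Complex.I * (α : ℂ) * F x‖ with hm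
  set r := rhoS ε (a * ‖x‖ ^ 2 + b) with hr
  have hr0 : 0 < r := rhoS_pos ε _ hε
  have hrle : r ≤ a + |b| + 1 := rhoS_le ε a b hε hε1 ha x hx
  set N := ‖F x‖ ^ 2 + ε with hN
  have hDb' : ‖D - Complex.I * (α : ℂ) * trial ε a b c F x‖ ≤ |c * g'| + 2 * |c * √r| * (m / √N) := hDb
  have e1 : (2 * |c * √r| * (m / √N)) ^ 2 = 4 * c ^ 2 * r * m ^ 2 * (1 / N) := by
    rw [mul_pow, mul_pow, sq_abs, div_pow, mul_pow, Real.sq_sqrt hr0.le, Real.sq_sqrt hp.le]; ring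
  have e2 : |c * g'| ^ 2 ≤ c ^ 2 * (4 * a ^ 2 / ε) := by
    rw [sq_abs, mul_pow]
    gcongr
    exact hgb.trans (by gcongr)
  have e3 : 4 * c ^ 2 * r * m ^ 2 * (1 / N) ≤ 4 * c ^ 2 * (a + |b| + 1) * κ * (1 / N) := by
    gcongr
  calc _ ≤ (|c * g'| + 2 * |c * √r| * (m / √N)) ^ 2 := by gcongr
    _ ≤ 2 * |c * g'| ^ 2 + 2 * (2 * |c * √r| * (m / √N)) ^ 2 := by
      nlinarith [sq_nonneg (|c * g'| - 2 * |c * √r| * (m / √N))]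
    _ ≤ 2 * (c ^ 2 * (4 * a ^ 2 / ε)) + 2 * (4 * c ^ 2 * (a + |b| + 1) * κ * (1 / N)) := by
      rw [e1]; gcongr
    _ = _ := by ring

/-- hypotheses on the phase section -/
def GoodF (Om κ : ℝ) (F : Pt → ℂ) : Prop :=
  Differentiable ℝ F ∧
  (∀ x, ∃ d, HasDerivAt (fun t : ℝ => F (x + t • e0)) d 0 ∧
      ‖d - Complex.I * ((-(Om * x 1 / 2) : ℝ) : ℂ) * F x‖ ^ 2 ≤ κ) ∧
  (∀ x, ∃ d, HasDerivAt (fun t : ℝ => F (x + t • e1)) d 0 ∧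
      ‖d - Complex.I * ((Om * x 0 / 2 : ℝ) : ℂ) * F x‖ ^ 2 ≤ κ)

lemma trial_cov2 (ε a b c κ Om : ℝ) (hε : 0 < ε) (hε1 : ε ≤ 1) (ha : 0 < a) (F : Pt → ℂ)
    (hF : GoodF Om κ F) (x : Pt) (hx : x ∈ B1) :
    ‖pd1 (trial ε a b c F) x - Complex.I * ((-(Om * x 1 / 2) : ℝ) : ℂ) * trial ε a b c F x‖ ^ 2
    + ‖pd2 (trial ε a b c F) x - Complex.I * ((Om * x 0 / 2 : ℝ) : ℂ) * trial ε a b c F x‖ ^ 2 ≤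
      c ^ 2 * (16 * a ^ 2 / ε + 16 * (a + |b| + 1) * κ * (1 / (‖F x‖ ^ 2 + ε))) := by
  obtain ⟨h1, h2, h3⟩ := hF
  have k1 := trial_cov ε a b c κ _ hε hε1 ha F h1 x e0 hx (by simp [e0]) (h2 x)
  have k2 := trial_cov ε a b c κ _ hε hε1 ha F h1 x e1 hx (by simp [e1]) (h3 x)
  unfold pd1 pd2
  refine (add_le_add k1 k2).trans (le_of_eq ?_)
  ring

lemma invF_cont (ε : ℝ) (hε : 0 < ε) (F : Pt → ℂ) (hF : Continuous F) :
    Continuous (fun x => 1 / (‖F x‖ ^ 2 + ε)) := by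
  apply Continuous.div continuous_const (by fun_prop)
  intro x; positivity

lemma trial_adm (ε a b c κ Om : ℝ) (hε : 0 < ε) (hε1 : ε ≤ 1) (ha : 0 < a) (F : Pt → ℂ)
    (hF : GoodF Om κ F) (hn : ∫ x in B1, ‖trial ε a b c F x‖ ^ 2 = 1) :
    gpAdm (trial ε a b c F) := by
  have hd := trial_diff ε a b c hε F hF.1
  have hc := hd.continuous
  have hiF := invF_cont ε hε F hF.1.continuous
  set Φ := trial ε a b c F with hΦ
  have m1 : Measurable (pd1 Φ) := measurable_fderiv_apply_const ℝ Φ _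
  have m2 : Measurable (pd2 Φ) := measurable_fderiv_apply_const ℝ Φ _
  have hsq : IntegrableOn (fun x => ‖Φ x‖ ^ 2) B1 := cont_intOn _ (by fun_prop)
  have hk : IntegrableOn (fun x => ‖pd1 Φ x‖ ^ 2 + ‖pd2 Φ x‖ ^ 2) B1 := by
    have hb : IntegrableOn (fun x => 2 * (c ^ 2 * (16 * a ^ 2 / ε + 16 * (a + |b| + 1) * κ * (1 / (‖F x‖ ^ 2 + ε))))
        + 2 * (Om ^ 2 / 4 * ‖x‖ ^ 2 * ‖Φ x‖ ^ 2)) B1 := cont_intOn _ (by fun_prop)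
    refine Integrable.mono' hb ((m1.norm.pow_const 2).add (m2.norm.pow_const 2)).aestronglyMeasurable ?_
    refine (ae_restrict_iff' measB1).2 (Filter.Eventually.of_forall ?_)
    intro x hx
    rw [Real.norm_eq_abs, abs_of_nonneg (by positivity)]
    have hcov := trial_cov2 ε a b c κ Om hε hε1 ha F hF x hx
    rw [← hΦ] at hcov
    set q1 := Complex.I * ((-(Om * x 1 / 2) : ℝ) : ℂ) * Φ x with hq1
    set q2 := Complex.I * ((Om * x 0 / 2 : ℝ) : ℂ) * Φ x with hq2
    have hq : ‖q1‖ ^ 2 + ‖q2‖ ^ 2 = Om ^ 2 / 4 * ‖x‖ ^ 2 * ‖Φ x‖ ^ 2 := by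
      rw [hq1, hq2, normsq_pt]
      simp only [norm_mul, Complex.norm_I, Complex.norm_real, Real.norm_eq_abs, mul_pow, sq_abs]
      ring
    have tri : ∀ p q : ℂ, ‖p‖ ^ 2 ≤ 2 * ‖p - q‖ ^ 2 + 2 * ‖q‖ ^ 2 := by
      intro p q
      have : ‖p‖ ≤ ‖p - q‖ + ‖q‖ := by simpa using norm_add_le (p - q) q
      nlinarith [norm_nonneg p, sq_nonneg (‖p - q‖ - ‖q‖)]
    have t1 := tri (pd1 Φ x) q1
    have t2 := tri (pd2 Φ x) q2
    linarith
  refine ⟨hd.differentiableOn, hsq, hk, cont_intOn _ (by fun_prop), ?_, hn⟩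
  have hmm : Measurable (fun x => (starRingEnd ℂ (Φ x) * angMom Φ x).re) := by
    unfold angMom
    have hmc : Measurable Φ := hc.measurable
    have hcc : Measurable (fun x => starRingEnd ℂ (Φ x)) := (Complex.continuous_conj.comp hc).measurable
    have hx0 : Measurable (fun x : Pt => ((x 0 : ℝ) : ℂ)) := by
      apply Continuous.measurable; fun_prop
    have hx1 : Measurable (fun x : Pt => ((x 1 : ℝ) : ℂ)) := by
      apply Continuous.measurable; fun_prop
    exact Complex.measurable_re.comp (hcc.mul ((((hx0.mul m2).sub (hx1.mul m1))).const_mul _))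
  refine Integrable.mono' (hsq.add hk) hmm.aestronglyMeasurable ?_
  refine (ae_restrict_iff' measB1).2 (Filter.Eventually.of_forall ?_)
  intro x hx
  have hx1 : ‖x‖ < 1 := by simpa [B1] using hx
  have hxs := normsq_pt x
  have hx2 : x 0 ^ 2 + x 1 ^ 2 ≤ 1 := by rw [← hxs]; nlinarith [norm_nonneg x]
  have hx0a : |x 0| ≤ 1 := by rw [← sq_le_one_iff_abs_le_one]; nlinarith [sq_nonneg (x 1)]
  have hx1a : |x 1| ≤ 1 := by rw [← sq_le_one_iff_abs_le_one]; nlinarith [sq_nonneg (x 0)]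
  have hang : ‖angMom Φ x‖ ≤ ‖pd2 Φ x‖ + ‖pd1 Φ x‖ := by
    unfold angMom
    rw [norm_mul, norm_neg, Complex.norm_I, one_mul]
    refine (norm_sub_le _ _).trans ?_
    rw [norm_mul, norm_mul, Complex.norm_real, Complex.norm_real, Real.norm_eq_abs, Real.norm_eq_abs]
    exact add_le_add (mul_le_of_le_one_left (norm_nonneg _) hx0a)
      (mul_le_of_le_one_left (norm_nonneg _) hx1a)
  have h1 : ‖(starRingEnd ℂ (Φ x) * angMom Φ x).re‖ ≤ ‖Φ x‖ * ‖angMom Φ x‖ := by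
    rw [Real.norm_eq_abs]
    refine (Complex.abs_re_le_norm _).trans ?_
    rw [norm_mul, RCLike.norm_conj]
  refine h1.trans ?_
  simp only [Pi.add_apply]
  nlinarith [norm_nonneg (Φ x), norm_nonneg (angMom Φ x), sq_nonneg (‖Φ x‖ - ‖pd1 Φ x‖),
    sq_nonneg (‖Φ x‖ - ‖pd2 Φ x‖), mul_le_mul_of_nonneg_left hang (norm_nonneg (Φ x))]

lemma goodF_exists (Ω₀ ε : ℝ) (hΩ : 0 < Ω₀) (hε : 0 < ε) :
    ∃ F : Pt → ℂ, GoodF (Ω₀ / ε) ((16 * Ω₀ ^ 2 + 256) / ε) F ∧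
      ∫ x in B1, 1 / (‖F x‖ ^ 2 + ε) ≤ 100 * π + 64 * (π * (Real.log (1 + ε) - Real.log ε)) := by
  set l := √ε with hl
  have hl0 : 0 < l := Real.sqrt_pos.2 hε
  have hls : l ^ 2 = ε := Real.sq_sqrt hε.le
  set K : ℤ := ⌈1 / l⌉ + 1 with hK
  set A := stP (Ω₀ / ε) l ((Finset.Icc (-K) K).filter (fun k => k % 2 = 0)) with hA
  set B := stP (Ω₀ / ε) l ((Finset.Icc (-K) K).filter (fun k => k % 2 = 1)) with hB
  have dA : Differentiable ℝ A := stP_diff _ _ _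
  have dB : Differentiable ℝ B := stP_diff _ _ _
  have hO : 0 ≤ Ω₀ / ε := by positivity
  obtain ⟨w, hw, hQ⟩ := exists_good_w ε hε A B dA.continuous dB.continuous (by
    intro x hx
    apply stP_lower
    have hx1 : ‖x‖ < 1 := by simpa [B1] using hx
    have hx2 : x 0 ^ 2 + x 1 ^ 2 ≤ 1 := by rw [← normsq_pt]; nlinarith [norm_nonneg x]
    have hx1a : |x 1| ≤ 1 := by rw [← sq_le_one_iff_abs_le_one]; nlinarith [sq_nonneg (x 0)]
    have : |x 1 / l| ≤ 1 / l := by rw [abs_div, abs_of_pos hl0]; gcongr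
    have h2 := Int.le_ceil (1 / l)
    rw [hK]; push_cast; linarith)
  refine ⟨fun x => A x + w * B x, ⟨dA.add (dB.const_mul w), ?_, ?_⟩, hQ⟩
  · intro x
    obtain ⟨d1, h1, b1⟩ := stP_d0 (Ω₀ / ε) l hO hl0 ((Finset.Icc (-K) K).filter (fun k => k % 2 = 0)) x
    obtain ⟨d2, h2, b2⟩ := stP_d0 (Ω₀ / ε) l hO hl0 ((Finset.Icc (-K) K).filter (fun k => k % 2 = 1)) x
    refine ⟨_, h1.add (h2.const_mul w), ?_⟩
    rw [← hA] at b1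
    rw [← hB] at b2
    set α : ℂ := Complex.I * ((-(Ω₀ / ε * x 1 / 2) : ℝ) : ℂ) with hα
    have e : d1 + w * d2 - α * (A x + w * B x) = (d1 - α * A x) + w * (d2 - α * B x) := by ring
    rw [e]
    have h3 : ‖(d1 - α * A x) + w * (d2 - α * B x)‖ ≤ 4 * (Ω₀ / ε * l) := by
      refine (norm_add_le _ _).trans ?_
      rw [norm_mul]
      have := mul_le_of_le_one_left (norm_nonneg (d2 - α * B x)) hw.le
      linarith
    calc _ ≤ (4 * (Ω₀ / ε * l)) ^ 2 := by gcongr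
      _ = 16 * Ω₀ ^ 2 / ε := by
        rw [mul_pow, mul_pow, hls]; field_simp; ring
      _ ≤ _ := by gcongr; linarith
  · intro x
    obtain ⟨d1, h1, b1⟩ := stP_d1 (Ω₀ / ε) l hl0 ((Finset.Icc (-K) K).filter (fun k => k % 2 = 0)) x
    obtain ⟨d2, h2, b2⟩ := stP_d1 (Ω₀ / ε) l hl0 ((Finset.Icc (-K) K).filter (fun k => k % 2 = 1)) x
    refine ⟨_, h1.add (h2.const_mul w), ?_⟩
    rw [← hA] at b1
    rw [← hB] at b2
    set α : ℂ := Complex.I * ((Ω₀ / ε * x 0 / 2 : ℝ) : ℂ) with hα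
    have e : d1 + w * d2 - α * (A x + w * B x) = (d1 - α * A x) + w * (d2 - α * B x) := by ring
    rw [e]
    have h3 : ‖(d1 - α * A x) + w * (d2 - α * B x)‖ ≤ 16 / l := by
      refine (norm_add_le _ _).trans ?_
      rw [norm_mul]
      have := mul_le_of_le_one_left (norm_nonneg (d2 - α * B x)) hw.le
      have e4 : 16 / l = 2 * (4 / l) + 2 * (4 / l) := by ring
      linarith
    calc _ ≤ (16 / l) ^ 2 := by gcongr
      _ = 256 / ε := by
        rw [div_pow, hls]; norm_num
      _ ≤ _ := by gcongr; nlinarith [sq_nonneg Ω₀]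

/-- energy of the trial state -/
lemma trial_energy (Ω₀ b ε κ q : ℝ) (hΩ : 0 < Ω₀) (hε : 0 < ε) (hε1 : ε ≤ 1) (hκ : 0 ≤ κ)
    (hb : ∀ x, rhoTF Ω₀ x = max 0 (Ω₀ ^ 2 / 8 * ‖x‖ ^ 2 + b)) (hnorm : ∫ x in B1, rhoTF Ω₀ x = 1)
    (F : Pt → ℂ) (hF : GoodF (Ω₀ / ε) (κ / ε) F)
    (hQ : ∫ x in B1, 1 / (‖F x‖ ^ 2 + ε) ≤ q) (hq : 0 ≤ q) (R : ℝ) (hR : R = Ω₀ ^ 2 / 8 + |b| + 1)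
    (hsmall : R * (ε * q) + π * ε ≤ 1 / 2) :
    ∃ Φ, gpAdm Φ ∧ ε ^ 2 * gpEnergy ε (Ω₀ / ε) Φ ≤ tfEnergy Ω₀ (rhoTF Ω₀) +
      (2 * ε * (16 * (Ω₀ ^ 2 / 8) ^ 2 * π + 16 * R * κ * q) +
        (3 * R + Ω₀ ^ 2) * (2 * (R * (ε * q) + π * ε))) := by
  set a := Ω₀ ^ 2 / 8 with ha
  have ha0 : 0 < a := by positivity
  have hR0 : 0 < R := by rw [hR]; positivity
  have hFc := hF.1.continuous
  have hrc := rhoTF_cont Ω₀ hΩ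
  have hiF := invF_cont ε hε F hFc
  have hSc := rhoS_cont ε
  set m : Pt → ℝ := fun x => rhoS ε (a * ‖x‖ ^ 2 + b) * (1 - ε * (1 / (‖F x‖ ^ 2 + ε))) with hm
  have hmc : Continuous m := by
    have : Continuous (fun x : Pt => rhoS ε (a * ‖x‖ ^ 2 + b)) := hSc.comp (by fun_prop)
    exact this.mul (by fun_prop)
  have hτ : ∀ x, 0 ≤ ε * (1 / (‖F x‖ ^ 2 + ε)) ∧ ε * (1 / (‖F x‖ ^ 2 + ε)) ≤ 1 := by
    intro x
    refine ⟨by positivity, ?_⟩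
    rw [mul_one_div, div_le_one (by positivity)]
    nlinarith [sq_nonneg ‖F x‖]
  have hm0 : ∀ x, 0 ≤ m x := fun x =>
    mul_nonneg (rhoS_pos ε _ hε).le (by linarith [(hτ x).2])
  have hmR : ∀ x ∈ B1, m x ≤ R := by
    intro x hx
    have h1 := rhoS_le ε a b hε hε1 ha0 x hx
    rw [← hR] at h1
    exact (mul_le_of_le_one_right (rhoS_pos ε _ hε).le (by linarith [(hτ x).1])).trans h1
  have hrR : ∀ x ∈ B1, rhoTF Ω₀ x ≤ R := by
    intro x hx
    have hx1 : ‖x‖ < 1 := by simpa [B1] using hx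
    rw [hb, hR]
    apply max_le (by positivity)
    have : ‖x‖ ^ 2 ≤ 1 := by nlinarith [norm_nonneg x]
    have := le_abs_self b
    nlinarith
  have hr0 : ∀ x, 0 ≤ rhoTF Ω₀ x := fun x => by rw [hb]; exact le_max_left _ _
  have hdiff : ∀ x ∈ B1, |m x - rhoTF Ω₀ x| ≤ R * (ε * (1 / (‖F x‖ ^ 2 + ε))) + ε := by
    intro x hx
    have h1 := rhoS_le ε a b hε hε1 ha0 x hx
    rw [← hR] at h1
    have h2 := abs_le.1 (rhoS_close ε (a * ‖x‖ ^ 2 + b) hε)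
    rw [← hb] at h2
    have h3 := (rhoS_pos ε (a * ‖x‖ ^ 2 + b) hε).le
    have h4 := hτ x
    simp only [hm]
    set τ := ε * (1 / (‖F x‖ ^ 2 + ε))
    have h5 : rhoS ε (a * ‖x‖ ^ 2 + b) * τ ≤ R * τ := mul_le_mul_of_nonneg_right h1 h4.1
    have h6 := mul_nonneg h3 h4.1
    rw [abs_le]
    constructor <;> nlinarith [h2.1, h2.2]
  have iF := cont_intOn _ hiF
  have im := cont_intOn _ hmc
  have ir := cont_intOn _ hrc
  have hI : ∫ x in B1, |m x - rhoTF Ω₀ x| ≤ R * (ε * q) + π * ε := by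
    calc _ ≤ ∫ x in B1, (R * (ε * (1 / (‖F x‖ ^ 2 + ε))) + ε) :=
          setIntegral_mono_on (cont_intOn _ (by fun_prop)) (cont_intOn _ (by fun_prop)) measB1 hdiff
      _ = R * (ε * ∫ x in B1, 1 / (‖F x‖ ^ 2 + ε)) + π * ε := by
          rw [integral_add (cont_intOn _ (by fun_prop)) (cont_intOn _ (by fun_prop)),
            integral_const_mul, integral_const_mul]
          simp [volB1]
      _ ≤ _ := by gcongr
  set M := ∫ x in B1, m x with hM
  have hM1 : |M - 1| ≤ R * (ε * q) + π * ε := by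
    rw [hM, ← hnorm, ← integral_sub im ir]
    exact (abs_integral_le_integral_abs).trans hI
  have hMlow : 1 / 2 ≤ M := by linarith [(abs_le.1 hM1).1]
  have hMpos : 0 < M := by linarith
  set c := 1 / √M with hc
  have hcs : c ^ 2 = 1 / M := by rw [hc, div_pow, Real.sq_sqrt hMpos.le, one_pow]
  have hc2 : c ^ 2 ≤ 2 := by rw [hcs, div_le_iff₀ hMpos]; linarith
  set Φ := trial ε a b c F with hΦ
  have hρ : ∀ x, ‖Φ x‖ ^ 2 = c ^ 2 * m x := fun x => trial_normsq ε a b c hε F x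
  have hone : ∫ x in B1, ‖Φ x‖ ^ 2 = 1 := by
    simp_rw [hρ]
    rw [integral_const_mul, ← hM, hcs]; field_simp
  have hadm : gpAdm Φ := trial_adm ε a b c (κ / ε) (Ω₀ / ε) hε hε1 ha0 F hF hone
  refine ⟨Φ, hadm, ?_⟩
  have hgi := gpDensity_integrable ε (Ω₀ / ε) Φ hadm
  -- L1 distance of the trial density
  have hL1 : ∫ x in B1, |c ^ 2 * m x - rhoTF Ω₀ x| ≤ 2 * (R * (ε * q) + π * ε) := by
    calc _ ≤ ∫ x in B1, (|c ^ 2 - 1| * m x + |m x - rhoTF Ω₀ x|) := by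
          apply setIntegral_mono_on (cont_intOn _ (by fun_prop)) (cont_intOn _ (by fun_prop)) measB1
          intro x _
          have e : c ^ 2 * m x - rhoTF Ω₀ x = (c ^ 2 - 1) * m x + (m x - rhoTF Ω₀ x) := by ring
          rw [e]
          refine (abs_add_le _ _).trans ?_
          rw [abs_mul, abs_of_nonneg (hm0 x)]
      _ = |c ^ 2 - 1| * M + ∫ x in B1, |m x - rhoTF Ω₀ x| := by
          rw [integral_add (cont_intOn _ (by fun_prop)) (cont_intOn _ (by fun_prop)), integral_const_mul]
      _ = |M - 1| + ∫ x in B1, |m x - rhoTF Ω₀ x| := by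
          congr 1
          rw [hcs, ← abs_of_pos hMpos, ← abs_mul, abs_of_pos hMpos, sub_mul, one_div,
            inv_mul_cancel₀ hMpos.ne', one_mul, abs_sub_comm]
      _ ≤ _ := by linarith
  -- pointwise bound of the energy density
  have hpt : ∀ x ∈ B1, ε ^ 2 * gpDensity ε (Ω₀ / ε) Φ x ≤
      2 * ε * (16 * a ^ 2 + 16 * R * κ * (1 / (‖F x‖ ^ 2 + ε)))
      + ((rhoTF Ω₀ x) ^ 2 - Ω₀ ^ 2 * ‖x‖ ^ 2 * rhoTF Ω₀ x / 4)
      + (3 * R + Ω₀ ^ 2) * |c ^ 2 * m x - rhoTF Ω₀ x| := by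
    intro x hx
    have hx1 : ‖x‖ < 1 := by simpa [B1] using hx
    have hx2 : ‖x‖ ^ 2 ≤ 1 := by nlinarith [norm_nonneg x]
    have hcov := trial_cov2 ε a b c (κ / ε) (Ω₀ / ε) hε hε1 ha0 F hF x hx
    rw [← hΦ, ← hR] at hcov
    rw [gpDensity_eq]
    set X := ‖pd1 Φ x - Complex.I * ((-(Ω₀ / ε * x 1 / 2) : ℝ) : ℂ) * Φ x‖ ^ 2
    set Y := ‖pd2 Φ x - Complex.I * ((Ω₀ / ε * x 0 / 2 : ℝ) : ℂ) * Φ x‖ ^ 2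
    set ρ := c ^ 2 * m x with hρx
    have e4 : ‖Φ x‖ ^ 4 = ρ ^ 2 := by rw [hρx, ← hρ]; ring
    rw [e4, hρ, ← hρx]
    have e5 : ε ^ 2 * (X + Y - (Ω₀ / ε) ^ 2 / 4 * ‖x‖ ^ 2 * ρ + ρ ^ 2 / ε ^ 2) =
        ε ^ 2 * (X + Y) + (ρ ^ 2 - Ω₀ ^ 2 * ‖x‖ ^ 2 * ρ / 4) := by
      field_simp; ring
    rw [e5]
    set J := 1 / (‖F x‖ ^ 2 + ε) with hJ
    have hJ0 : 0 ≤ J := by rw [hJ]; positivity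
    have k1 : ε ^ 2 * (X + Y) ≤ 2 * ε * (16 * a ^ 2 + 16 * R * κ * J) := by
      calc _ ≤ ε ^ 2 * (c ^ 2 * (16 * a ^ 2 / ε + 16 * R * (κ / ε) * J)) := by gcongr
        _ ≤ ε ^ 2 * (2 * (16 * a ^ 2 / ε + 16 * R * (κ / ε) * J)) := by gcongr
        _ = _ := by field_simp
    have hρ0 : 0 ≤ ρ := mul_nonneg (sq_nonneg c) (hm0 x)
    have hρR : ρ ≤ 2 * R := by
      rw [hρx]
      exact mul_le_mul hc2 (hmR x hx) (hm0 x) (by norm_num)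
    have k2 : ρ ^ 2 - Ω₀ ^ 2 * ‖x‖ ^ 2 * ρ / 4 - ((rhoTF Ω₀ x) ^ 2 - Ω₀ ^ 2 * ‖x‖ ^ 2 * rhoTF Ω₀ x / 4)
        ≤ (3 * R + Ω₀ ^ 2) * |ρ - rhoTF Ω₀ x| := by
      have e6 : ρ ^ 2 - Ω₀ ^ 2 * ‖x‖ ^ 2 * ρ / 4 - ((rhoTF Ω₀ x) ^ 2 - Ω₀ ^ 2 * ‖x‖ ^ 2 * rhoTF Ω₀ x / 4)
        = (ρ + rhoTF Ω₀ x - Ω₀ ^ 2 * ‖x‖ ^ 2 / 4) * (ρ - rhoTF Ω₀ x) := by ring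
      rw [e6]
      refine (le_abs_self _).trans ?_
      rw [abs_mul]
      gcongr
      have hO2 : Ω₀ ^ 2 * ‖x‖ ^ 2 ≤ Ω₀ ^ 2 := mul_le_of_le_one_right (by positivity) hx2
      have hO3 : 0 ≤ Ω₀ ^ 2 * ‖x‖ ^ 2 := by positivity
      have := hrR x hx
      have := hr0 x
      rw [abs_le]; constructor <;> linarith
    linarith
  have hfin : ∫ x in B1, ε ^ 2 * gpDensity ε (Ω₀ / ε) Φ x ≤
      ∫ x in B1, (2 * ε * (16 * a ^ 2 + 16 * R * κ * (1 / (‖F x‖ ^ 2 + ε)))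
      + ((rhoTF Ω₀ x) ^ 2 - Ω₀ ^ 2 * ‖x‖ ^ 2 * rhoTF Ω₀ x / 4)
      + (3 * R + Ω₀ ^ 2) * |c ^ 2 * m x - rhoTF Ω₀ x|) :=
    setIntegral_mono_on (hgi.const_mul _) (cont_intOn _ (by fun_prop)) measB1 hpt
  rw [integral_const_mul] at hfin
  refine hfin.trans ?_
  rw [integral_add (cont_intOn _ (by fun_prop)) (cont_intOn _ (by fun_prop)),
    integral_add (cont_intOn _ (by fun_prop)) (cont_intOn _ (by fun_prop)),
    integral_const_mul, integral_const_mul,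
    integral_add (cont_intOn _ (by fun_prop)) (cont_intOn _ (by fun_prop))]
  have e7 : ∫ x in B1, 16 * a ^ 2 = 16 * a ^ 2 * π := by simp [volB1]; ring
  rw [e7, integral_const_mul]
  have g1 : 2 * ε * (16 * a ^ 2 * π + 16 * R * κ * ∫ x in B1, 1 / (‖F x‖ ^ 2 + ε)) ≤
      2 * ε * (16 * a ^ 2 * π + 16 * R * κ * q) := by gcongr
  have g2 : (3 * R + Ω₀ ^ 2) * ∫ x in B1, |c ^ 2 * m x - rhoTF Ω₀ x| ≤
      (3 * R + Ω₀ ^ 2) * (2 * (R * (ε * q) + π * ε)) := by gcongr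
  have g3 : ∫ x in B1, ((rhoTF Ω₀ x) ^ 2 - Ω₀ ^ 2 * ‖x‖ ^ 2 * rhoTF Ω₀ x / 4) = tfEnergy Ω₀ (rhoTF Ω₀) := rfl
  linarith

theorem stmt9 (Ω₀ : ℝ) (hΩ : 0 < Ω₀) :
    ∃ (C ε₀ : ℝ), 0 < ε₀ ∧ ∀ ε : ℝ, 0 < ε → ε < ε₀ →
      ∀ Ψ : Pt → ℂ, IsGPMinimizer ε (Ω₀ / ε) Ψ →
        (∫ x in B1, |‖Ψ x‖ ^ 2 - rhoTF Ω₀ x|) ≤ C * Real.sqrt (ε * |Real.log ε|) := by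
  obtain ⟨b, hb, hnorm⟩ := rhoTF_form Ω₀ hΩ
  have hpi := Real.pi_pos
  set R := Ω₀ ^ 2 / 8 + |b| + 1 with hR
  have hR0 : 0 < R := by rw [hR]; positivity
  set κ := 16 * Ω₀ ^ 2 + 256 with hκ
  have hκ0 : 0 < κ := by positivity
  set G := R * (228 * π) + π with hG
  have hG0 : 0 < G := by positivity
  set C := 2 * (16 * (Ω₀ ^ 2 / 8) ^ 2 * π + 16 * R * κ * (228 * π)) + (3 * R + Ω₀ ^ 2) * (2 * G) with hC
  have hev : ∀ᶠ ε in nhdsWithin (0:ℝ) (Set.Ioi 0), |Real.log ε * ε| < 1 / (2 * G) := by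
    have ht := tendsto_log_mul_rpow_nhdsGT_zero (r := 1) one_pos
    simp only [Real.rpow_one] at ht
    have := ht.abs
    simp only [abs_zero] at this
    exact this.eventually_lt_const (by positivity)
  obtain ⟨ε₁, hε₁, hsub⟩ := mem_nhdsGT_iff_exists_Ioo_subset.1 hev
  refine ⟨C + π, min ε₁ (Real.exp (-1)), lt_min hε₁ (Real.exp_pos _), ?_⟩
  intro ε hε hlt Ψ hΨ
  have h1 : |Real.log ε * ε| < 1 / (2 * G) := hsub ⟨hε, hlt.trans_le (min_le_left _ _)⟩
  have hlog : Real.log ε < -1 := by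
    rw [Real.log_lt_iff_lt_exp hε]; exact hlt.trans_le (min_le_right _ _)
  have hε1 : ε ≤ 1 := by
    have : Real.exp (-1) ≤ 1 := by rw [Real.exp_le_one_iff]; norm_num
    exact (hlt.trans_le (min_le_right _ _)).le.trans this
  set L := |Real.log ε| with hL
  have hLeq : L = -Real.log ε := by rw [hL, abs_of_neg (by linarith)]
  have hL1 : 1 ≤ L := by rw [hLeq]; linarith
  rw [abs_mul, abs_of_pos hε, ← hL] at h1
  obtain ⟨F, hF, hQ⟩ := goodF_exists Ω₀ ε hΩ hε
  have hQ' : ∫ x in B1, 1 / (‖F x‖ ^ 2 + ε) ≤ 228 * π * L := by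
    refine hQ.trans ?_
    have h2 : Real.log (1 + ε) ≤ 1 := by
      have := Real.log_le_sub_one_of_pos (show 0 < 1 + ε by linarith)
      linarith
    have h3 : Real.log (1 + ε) - Real.log ε ≤ 2 * L := by rw [hLeq] at hL1 ⊢; linarith
    nlinarith [mul_le_mul_of_nonneg_left h3 hpi.le, mul_le_mul_of_nonneg_left hL1 hpi.le]
  have hεL : ε ≤ ε * L := le_mul_of_one_le_right hε.le hL1
  have hRG : R * (ε * (228 * π * L)) + π * ε ≤ G * (ε * L) := by
    rw [hG]
    nlinarith [mul_le_mul_of_nonneg_left hεL hpi.le]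
  have hsmall : R * (ε * (228 * π * L)) + π * ε ≤ 1 / 2 := by
    refine hRG.trans ?_
    rw [lt_div_iff₀ (by positivity)] at h1
    nlinarith
  obtain ⟨Φ, hadm, hE⟩ := trial_energy Ω₀ b ε κ (228 * π * L) hΩ hε hε1 hκ0.le hb hnorm F hF hQ'
    (by positivity) R hR hsmall
  have hpos : 0 < ε * L := by positivity
  refine final_step Ω₀ hΩ C ε (√(ε * L)) hε (Real.sqrt_pos.2 hpos) Φ hadm ?_ Ψ hΨ
  rw [Real.sq_sqrt hpos.le]
  refine hE.trans ?_
  gcongr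
  rw [hC]
  have t1 : (3 * R + Ω₀ ^ 2) * (2 * (R * (ε * (228 * π * L)) + π * ε)) ≤
      (3 * R + Ω₀ ^ 2) * (2 * (G * (ε * L))) := by gcongr
  have t2 : 2 * ε * (16 * (Ω₀ ^ 2 / 8) ^ 2 * π) ≤ 2 * (ε * L) * (16 * (Ω₀ ^ 2 / 8) ^ 2 * π) := by gcongr
  nlinarith
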